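/- arXiv:1208.1075 — 7 statements merged into one kernel-verified Lean document; each statement's English description precedes it below -/
import Mathlib

section
/- Let τ, τ′ ∈ S_k, let 1 ≤ i, j ≤ k, and let χ be one of the three trivial bijections on permutations (reverse, complement, or inverse). If χ(τ) = τ′ and χ(red(τ∖τ_i)) = red(τ′∖τ′_j), then χ maps S_n(τ̂_(i)) bijectively onto S_n(τ̂′_(j)); in particular |S_n(τ̂_(i))| = |S_n(τ̂′_(j))| for all n. -/
/-- `g` is an occurrence of the pattern `τ` in `π`: the indices `g a` are increasing and the
subsequence `π (g 0), …, π (g k)` is order-isomorphic to (i.e. has reduction) `τ`. -/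
def IsOcc {k n : ℕ} (τ : Equiv.Perm (Fin k)) (π : Equiv.Perm (Fin n)) (g : Fin k → Fin n) : Prop :=
  StrictMono g ∧ ∀ a b : Fin k, τ a < τ b ↔ π (g a) < π (g b)

/-- `π` avoids the hatted pattern `τ̂_(i)` (the pattern `τ ∈ S_{k+1}` with its `i`-th entry
marked): every `k`-element subsequence of `π` whose reduction is `red(τ∖τ_i)` (which is encoded
by the order-isomorphism condition with `τ ∘ i.succAbove`) can be extended, by adjoining one
further entry of `π` at some position, to a `(k+1)`-element subsequence with reduction `τ`. -/
def AvoidsHat {k n : ℕ} (τ : Equiv.Perm (Fin (k + 1))) (i : Fin (k + 1))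
    (π : Equiv.Perm (Fin n)) : Prop :=
  ∀ g : Fin k → Fin n, StrictMono g →
    (∀ a b : Fin k, τ (i.succAbove a) < τ (i.succAbove b) ↔ π (g a) < π (g b)) →
    ∃ h : Fin (k + 1) → Fin n, IsOcc τ π h ∧ Set.range g ⊆ Set.range h

/-- the `a`-th value of the reduction of `q`: the number of entries of `q` smaller than `q a`. -/
def redCount {k m : ℕ} (q : Fin k → Fin m) (a : Fin k) : Fin k :=
  ⟨(Finset.univ.filter fun b => q b < q a).card, by
    have hsub : (Finset.univ.filter fun b => q b < q a) ⊆ Finset.univ.erase a := by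
      intro b hb
      rw [Finset.mem_filter] at hb
      exact Finset.mem_erase.mpr ⟨fun h => absurd hb.2 (by rw [h]; exact lt_irrefl _),
        Finset.mem_univ b⟩
    calc (Finset.univ.filter fun b => q b < q a).card
        ≤ (Finset.univ.erase a).card := Finset.card_le_card hsub
      _ < Finset.univ.card := Finset.card_erase_lt_of_mem (Finset.mem_univ a)
      _ = k := by simp⟩

theorem redCount_injective {k m : ℕ} {q : Fin k → Fin m} (hq : Function.Injective q) :
    Function.Injective (redCount q) := by
  intro a b hab
  by_contra hne
  have key : ∀ x y : Fin k, q x < q y →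
      (Finset.univ.filter fun c => q c < q x).card
        < (Finset.univ.filter fun c => q c < q y).card := by
    intro x y hxy
    apply Finset.card_lt_card
    constructor
    · intro c hc
      rw [Finset.mem_filter] at hc ⊢
      exact ⟨Finset.mem_univ c, lt_trans hc.2 hxy⟩
    · intro hsub
      have hx : x ∈ Finset.univ.filter fun c => q c < q y := by
        rw [Finset.mem_filter]; exact ⟨Finset.mem_univ x, hxy⟩
      have := hsub hx
      rw [Finset.mem_filter] at this
      exact lt_irrefl _ this.2
  have hval : ((redCount q a : Fin k) : ℕ) = ((redCount q b : Fin k) : ℕ) := by rw [hab]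
  rcases lt_or_gt_of_ne (fun h : q a = q b => hne (hq h)) with h | h
  · exact absurd hval (Nat.ne_of_lt (key a b h))
  · exact absurd hval.symm (Nat.ne_of_lt (key b a h))

/-- The reduction `red q` of an injective sequence `q` of distinct values, as a permutation:
the `a`-th entry of `q` is replaced by its rank among the entries of `q` (0-indexed). -/
noncomputable def red {k m : ℕ} (q : Fin k → Fin m) (hq : Function.Injective q) :
    Equiv.Perm (Fin k) :=
  Equiv.ofBijective (redCount q) (Finite.injective_iff_bijective.mp (redCount_injective hq))

/-- The reverse of the permutation `π = π_1⋯π_m`, namely `π_m⋯π_1`. -/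
def reverseP {m : ℕ} (π : Equiv.Perm (Fin m)) : Equiv.Perm (Fin m) := Fin.revPerm.trans π

/-- The complement of the permutation `π`, replacing each entry `π_i` by `m + 1 − π_i`
(0-indexed: by `m - 1 - π_i`). -/
def complementP {m : ℕ} (π : Equiv.Perm (Fin m)) : Equiv.Perm (Fin m) := π.trans Fin.revPerm

/-!
Draw a permutation `π ∈ S_n` as its plot, the points `(p, π p)` of the square `Fin n × Fin n`. The
set of points of an occurrence of `σ` in `π` is itself a copy of the plot of `σ`, its columns and
its rows being chosen by two increasing maps. Reversal, complementation and inversion are the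
reflections of the square in its vertical axis, its horizontal axis and its diagonal, and a
reflection carries the copies of `σ` in `π` to the copies of `χ σ` in `χ π`, respecting inclusion.
Avoiding `τ̂_(i)` says that every copy of `red (τ∖τ_i)` lies in a copy of `τ`, a condition on
inclusions between copies, so `χ` preserves it.
-/

theorem red_lt_red_iff {k m : ℕ} {q : Fin k → Fin m} (hq : Function.Injective q) {a b : Fin k} :
    red q hq a < red q hq b ↔ q a < q b := by
  have red_le {a b : Fin k} (hab : q a ≤ q b) : red q hq a ≤ red q hq b := by
    change (Finset.univ.filter fun c ↦ q c < q a).card ≤ (Finset.univ.filter fun c ↦ q c < q b).card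
    exact Finset.card_le_card <| Finset.monotone_filter_right _ fun _ _ hc ↦ hc.trans_le hab
  constructor
  · contrapose!
    exact red_le
  · intro hab
    exact (red_le hab.le).lt_of_ne ((red q hq).injective.ne (ne_of_apply_ne q hab.ne))

section Occurrences

variable {k l n : ℕ}

/-- The set of points `P` of the plot of `π` is an occurrence of `σ`: its columns are enumerated by
an increasing map `x`, its rows by an increasing map `y`, and its `a`-th point from the left is the
`σ a`-th from below. Unlike `IsOcc`, this treats positions and values alike. -/
def OccursAt (σ : Equiv.Perm (Fin k)) (π : Equiv.Perm (Fin n)) (P : Set (Fin n × Fin n)) : Prop :=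
  ∃ x y : Fin k → Fin n, StrictMono x ∧ StrictMono y ∧ (∀ a, π (x a) = y (σ a)) ∧
    P = Set.range fun a ↦ (x a, y (σ a))

theorem isOcc_iff_exists_strictMono {σ : Equiv.Perm (Fin k)} {π : Equiv.Perm (Fin n)}
    {x : Fin k → Fin n} :
    IsOcc σ π x ↔ StrictMono x ∧ ∃ y : Fin k → Fin n, StrictMono y ∧ ∀ a, π (x a) = y (σ a) := by
  refine and_congr_right fun _ ↦ ⟨fun h ↦ ⟨fun b ↦ π (x (σ.symm b)), ?_, by simp⟩, ?_⟩
  · intro b c hbc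
    exact (h _ _).1 (by simpa using hbc)
  · rintro ⟨y, hy, hxy⟩ a b
    rw [hxy, hxy, hy.lt_iff_lt]

theorem occursAt_iff_exists_isOcc {σ : Equiv.Perm (Fin k)} {π : Equiv.Perm (Fin n)}
    {P : Set (Fin n × Fin n)} :
    OccursAt σ π P ↔ ∃ g, IsOcc σ π g ∧ (fun p ↦ (p, π p)) '' Set.range g = P := by
  simp only [OccursAt, isOcc_iff_exists_strictMono, ← Set.range_comp, Function.comp_def]
  constructor
  · rintro ⟨x, y, hx, hy, hxy, rfl⟩
    exact ⟨x, ⟨hx, y, hy, hxy⟩, by simp only [hxy]⟩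
  · rintro ⟨x, ⟨hx, y, hy, hxy⟩, rfl⟩
    exact ⟨x, y, hx, hy, hxy, by simp only [hxy]⟩

/-- Every occurrence of `σ` in `π` is contained in an occurrence of `τ`. This is the form of
hatted avoidance in which the two patterns need not be related. -/
def OccurrencesExtend (σ : Equiv.Perm (Fin k)) (τ : Equiv.Perm (Fin l)) (π : Equiv.Perm (Fin n)) :
    Prop :=
  ∀ P, OccursAt σ π P → ∃ Q, OccursAt τ π Q ∧ P ⊆ Q

/-- The pattern `red (τ∖τ_i)` left by deleting the entry `τ_i`. -/
noncomputable def deleteEntry (τ : Equiv.Perm (Fin (k + 1))) (i : Fin (k + 1)) :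
    Equiv.Perm (Fin k) :=
  red (fun a ↦ τ (i.succAbove a)) (τ.injective.comp Fin.succAbove_right_injective)

theorem avoidsHat_iff_occurrencesExtend {τ : Equiv.Perm (Fin (k + 1))} {i : Fin (k + 1)}
    {π : Equiv.Perm (Fin n)} :
    AvoidsHat τ i π ↔ OccurrencesExtend (deleteEntry τ i) τ π := by
  have plot_injective : Function.Injective fun p ↦ (p, π p) := fun _ _ h ↦ congrArg Prod.fst h
  simp only [OccurrencesExtend, occursAt_iff_exists_isOcc, forall_exists_index, and_imp,
    forall_apply_eq_imp_iff₂, exists_exists_and_eq_and, Set.image_subset_image_iff plot_injective]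
  simp only [AvoidsHat, IsOcc, deleteEntry, red_lt_red_iff, and_imp]

end Occurrences

/-- The maps `χ m` on permutations are induced by symmetries `δ n` of the square: both are
involutions, and `δ n` moves the occurrences of `σ` in `π` to occurrences of `χ k σ` in `χ n π`. -/
structure IsPlotSymmetry (χ : ∀ m : ℕ, Equiv.Perm (Fin m) → Equiv.Perm (Fin m))
    (δ : ∀ n : ℕ, Fin n × Fin n → Fin n × Fin n) : Prop where
  involutive (m : ℕ) : Function.Involutive (χ m)
  plot_involutive (n : ℕ) : Function.Involutive (δ n)
  occursAt_image {k n : ℕ} {σ : Equiv.Perm (Fin k)} {π : Equiv.Perm (Fin n)}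
    {P : Set (Fin n × Fin n)} : OccursAt σ π P → OccursAt (χ k σ) (χ n π) (δ n '' P)

theorem strictMono_rev_comp_rev {k n : ℕ} {f : Fin k → Fin n} (hf : StrictMono f) :
    StrictMono fun a : Fin k ↦ (f a.rev).rev :=
  Fin.rev_strictAnti.comp (hf.comp_strictAnti Fin.rev_strictAnti)

theorem isPlotSymmetry_reverseP :
    IsPlotSymmetry (fun _ ↦ reverseP) (fun _ ↦ Prod.map Fin.rev id) where
  involutive m π := by ext; simp [reverseP]
  plot_involutive n := fun p ↦ Prod.ext (Fin.rev_rev _) rfl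
  occursAt_image := by
    rintro k n σ π _ ⟨x, y, hx, hy, hxy, rfl⟩
    refine ⟨fun a ↦ (x a.rev).rev, y, strictMono_rev_comp_rev hx, hy, ?_, ?_⟩
    · simp [reverseP, hxy]
    · rw [← Set.range_comp, ← Fin.rev_surjective.range_comp]
      rfl

theorem isPlotSymmetry_complementP :
    IsPlotSymmetry (fun _ ↦ complementP) (fun _ ↦ Prod.map id Fin.rev) where
  involutive m π := by ext; simp [complementP]
  plot_involutive n := fun p ↦ Prod.ext rfl (Fin.rev_rev _)
  occursAt_image := by
    rintro k n σ π _ ⟨x, y, hx, hy, hxy, rfl⟩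
    refine ⟨x, fun b ↦ (y b.rev).rev, hx, strictMono_rev_comp_rev hy, ?_, ?_⟩
    · simp [complementP, hxy]
    · rw [← Set.range_comp]
      simp [complementP, Function.comp_def]

theorem isPlotSymmetry_inv : IsPlotSymmetry (fun _ π ↦ π⁻¹) (fun _ ↦ Prod.swap) where
  involutive m := inv_involutive
  plot_involutive n := Prod.swap_swap
  occursAt_image := by
    rintro k n σ π _ ⟨x, y, hx, hy, hxy, rfl⟩
    refine ⟨y, x, hy, hx, fun b ↦ ?_, ?_⟩
    · simp [Equiv.symm_apply_eq, hxy]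
    · rw [← Set.range_comp, ← σ.surjective.range_comp fun b ↦ (y b, x (σ⁻¹ b))]
      simp [Function.comp_def]

namespace IsPlotSymmetry

variable {χ : ∀ m : ℕ, Equiv.Perm (Fin m) → Equiv.Perm (Fin m)}
  {δ : ∀ n : ℕ, Fin n × Fin n → Fin n × Fin n} {k l n : ℕ}

theorem occursAt_image_iff (hχ : IsPlotSymmetry χ δ) {σ : Equiv.Perm (Fin k)}
    {π : Equiv.Perm (Fin n)} {P : Set (Fin n × Fin n)} :
    OccursAt (χ k σ) (χ n π) (δ n '' P) ↔ OccursAt σ π P := by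
  refine ⟨fun h ↦ ?_, hχ.occursAt_image⟩
  simpa only [hχ.involutive _ _, (hχ.plot_involutive n).leftInverse.image_image] using
    hχ.occursAt_image h

theorem occurrencesExtend_iff (hχ : IsPlotSymmetry χ δ) {σ : Equiv.Perm (Fin k)}
    {τ : Equiv.Perm (Fin l)} {π : Equiv.Perm (Fin n)} :
    OccurrencesExtend (χ k σ) (χ l τ) (χ n π) ↔ OccurrencesExtend σ τ π := by
  have image_surjective : Function.Surjective (Set.image (δ n)) :=
    (hχ.plot_involutive n).surjective.image_surjective
  rw [OccurrencesExtend, image_surjective.forall]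
  simp only [OccurrencesExtend, image_surjective.exists (p := fun Q ↦ OccursAt _ _ Q ∧ _ ⊆ Q),
    hχ.occursAt_image_iff, Set.image_subset_image_iff (hχ.plot_involutive n).injective]

theorem bijOn_occurrencesExtend (hχ : IsPlotSymmetry χ δ) (σ : Equiv.Perm (Fin k))
    (τ : Equiv.Perm (Fin l)) (n : ℕ) :
    Set.BijOn (χ n) {π | OccurrencesExtend σ τ π} {π | OccurrencesExtend (χ k σ) (χ l τ) π} :=
  (hχ.involutive n).toPerm.bijOn fun _ ↦ hχ.occurrencesExtend_iff

end IsPlotSymmetry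

/-- Lemma `hat2`. Let `χ` be one of the three trivial bijections on
permutations (reverse, complement, inverse), acting on permutations of every length. If
`χ(τ) = τ'` and `χ(red(τ∖τ_i)) = red(τ'∖τ'_j)`, then `χ` maps `S_n(τ̂_(i))` bijectively onto
`S_n(τ̂'_(j))`; in particular `|S_n(τ̂_(i))| = |S_n(τ̂'_(j))|` for all `n`. -/
theorem stmt1 {k : ℕ} (χ : ∀ m : ℕ, Equiv.Perm (Fin m) → Equiv.Perm (Fin m))
    (hχ : (∀ m (π : Equiv.Perm (Fin m)), χ m π = reverseP π) ∨
          (∀ m (π : Equiv.Perm (Fin m)), χ m π = complementP π) ∨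
          (∀ m (π : Equiv.Perm (Fin m)), χ m π = π⁻¹))
    (τ τ' : Equiv.Perm (Fin (k + 1))) (i j : Fin (k + 1))
    (hτ : χ (k + 1) τ = τ')
    (hred : χ k (red (fun a => τ (i.succAbove a)) (τ.injective.comp Fin.succAbove_right_injective))
      = red (fun a => τ' (j.succAbove a)) (τ'.injective.comp Fin.succAbove_right_injective))
    (n : ℕ) :
    Set.BijOn (χ n) {π : Equiv.Perm (Fin n) | AvoidsHat τ i π}
      {π : Equiv.Perm (Fin n) | AvoidsHat τ' j π} ∧
    Nat.card {π : Equiv.Perm (Fin n) | AvoidsHat τ i π}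
      = Nat.card {π : Equiv.Perm (Fin n) | AvoidsHat τ' j π} := by
  obtain ⟨δ, hδ⟩ : ∃ δ, IsPlotSymmetry χ δ := by
    rcases hχ with h | h | h
    · obtain rfl : χ = fun _ ↦ reverseP := funext₂ h
      exact ⟨_, isPlotSymmetry_reverseP⟩
    · obtain rfl : χ = fun _ ↦ complementP := funext₂ h
      exact ⟨_, isPlotSymmetry_complementP⟩
    · obtain rfl : χ = fun _ π ↦ π⁻¹ := funext₂ h
      exact ⟨_, isPlotSymmetry_inv⟩
  have hdelete : χ k (deleteEntry τ i) = deleteEntry τ' j := hred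
  have hbij : Set.BijOn (χ n) {π : Equiv.Perm (Fin n) | AvoidsHat τ i π}
      {π : Equiv.Perm (Fin n) | AvoidsHat τ' j π} := by
    simpa only [avoidsHat_iff_occurrencesExtend, hdelete, hτ] using
      hδ.bijOn_occurrencesExtend (deleteEntry τ i) τ n
  exact ⟨hbij, Nat.card_congr hbij.equiv⟩
end

section
/- Let τ ∈ S_k with k ≥ 2 and let 1 ≤ i ≤ k. Then S_n(τ̂_(i)) = S_n(τ̄_(i)) for all n = 1, 2, … if and only if τ_i is different from each of the four values τ_{i−1}−1, τ_{i−1}+1, τ_{i+1}−1, τ_{i+1}+1 (conditions involving a nonexistent neighbor τ_0 or τ_{k+1} being vacuously satisfied). -/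
/-- `π` avoids the barred pattern `τ̄_(i)`: every `k`-element subsequence of `π` whose reduction
is `red(τ∖τ_i)` can be extended to a `(k+1)`-element subsequence with reduction `τ` by adjoining
an entry of `π` at the place of the marked entry (the other `k` entries staying in place). -/
def AvoidsBar {k n : ℕ} (τ : Equiv.Perm (Fin (k + 1))) (i : Fin (k + 1))
    (π : Equiv.Perm (Fin n)) : Prop :=
  ∀ g : Fin k → Fin n, StrictMono g →
    (∀ a b : Fin k, τ (i.succAbove a) < τ (i.succAbove b) ↔ π (g a) < π (g b)) →
    ∃ h : Fin (k + 1) → Fin n, IsOcc τ π h ∧ ∀ a : Fin k, h (i.succAbove a) = g a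

/-!
For a fixed permutation `π`, an index tuple is an occurrence of at most one pattern. An occurrence
of `τ` that covers an occurrence of `red(τ∖τ_i)` omits some entry `τ_j`, and then
`red(τ∖τ_j) = red(τ∖τ_i)`; so a hatted extension is barred as soon as `j = i` is forced.
Conversely, if `j ≠ i` gives the same reduction, then `τ` itself avoids the hatted but not the
barred pattern.

It remains to see when two deletions agree. If deleting `τ_i` and deleting `τ_j` leave the same
pattern, compare them at the index `a` that `i` receives once `j` is deleted: the `a`-th remaining
entry is `τ_i` in one case and a position-neighbour `τ_{i'}` of it in the other, and since both
have the same rank after deletion, they are also neighbours in value. Conversely, swapping two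
entries adjacent in position and value interchanges the two deletions.
-/

open Equiv SimpleGraph

section SuccAbove

variable {k : ℕ}

theorem pathGraph_adj_succAbove (j : Fin (k + 1)) (a : Fin k) :
    (pathGraph (k + 1)).Adj (j.succAbove a) ((j.succAbove a).succAbove a) := by
  -- Both vertices lie in `{a, a + 1}`, and they differ.
  rw [pathGraph_adj]
  grind [Fin.succAbove]

theorem succAbove_eq_swap_of_pathGraph_adj {p q : Fin (k + 1)} (hpq : (pathGraph (k + 1)).Adj p q)
    (a : Fin k) : p.succAbove a = swap p q (q.succAbove a) := by
  -- If `{p, q} = {c, c + 1}`, the two sides can only differ from `q.succAbove a` at `a = c`.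
  rw [pathGraph_adj] at hpq
  grind [Fin.succAbove]

theorem exists_eq_succAbove_of_strictMono {f : Fin k → Fin (k + 1)} (hf : StrictMono f) :
    ∃ j : Fin (k + 1), f = j.succAbove := by
  have not_surjective : ¬ Function.Surjective f := fun hsurj => by
    simpa using Fintype.card_le_of_surjective f hsurj
  obtain ⟨j, hj⟩ : ∃ j, ∀ a, f a ≠ j := by simpa [Function.Surjective] using not_surjective
  obtain ⟨e, rfl⟩ : ∃ e, f = j.succAbove ∘ e := by
    rw [← Set.range_subset_range_iff_exists_comp, Fin.range_succAbove]
    rintro _ ⟨a, rfl⟩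
    exact hj a
  have he : StrictMono e := fun _ _ hab => (Fin.strictMono_succAbove j).lt_iff_lt.1 (hf hab)
  exact ⟨j, by rw [he.eq_id, Function.comp_id]⟩

end SuccAbove

namespace IsOcc

variable {k l m n : ℕ}

theorem refl (τ : Perm (Fin k)) : IsOcc τ τ id :=
  ⟨strictMono_id, fun _ _ => Iff.rfl⟩

theorem comp {σ : Perm (Fin l)} {τ : Perm (Fin m)} {π : Perm (Fin n)} {h : Fin m → Fin n}
    {g : Fin l → Fin m} (hh : IsOcc τ π h) (hg : IsOcc σ τ g) : IsOcc σ π (h ∘ g) :=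
  ⟨hh.1.comp hg.1, fun a b => (hg.2 a b).trans (hh.2 _ _)⟩

theorem pattern_unique {σ τ : Perm (Fin k)} {π : Perm (Fin n)} {g : Fin k → Fin n}
    (hσ : IsOcc σ π g) (hτ : IsOcc τ π g) : σ = τ := by
  have hmono : StrictMono (σ ∘ τ.symm) := fun a b hab => by
    simpa [hσ.2, ← hτ.2] using hab
  ext a
  simpa using congrArg Fin.val (congrFun hmono.eq_id (τ a))

end IsOcc

section Deletion

variable {k : ℕ}

/-- The pattern `red(τ∖τ_i)` obtained from `τ` by deleting its `i`-th entry. Positions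
other than `i` and values other than `τ i` are renumbered increasingly by `finSuccAboveEquiv`, so
that an occurrence of `deletion τ i` is exactly a subsequence tested by `AvoidsHat τ i` and
`AvoidsBar τ i`. -/
def deletion (τ : Perm (Fin (k + 1))) (i : Fin (k + 1)) : Perm (Fin k) :=
  (finSuccAboveEquiv i).trans <|
    (τ.subtypeEquiv (q := (· ≠ τ i)) fun _ => τ.injective.ne_iff.symm).trans
      (finSuccAboveEquiv (τ i)).symm

variable (τ : Perm (Fin (k + 1)))

theorem succAbove_deletion (i : Fin (k + 1)) (a : Fin k) :
    (τ i).succAbove (deletion τ i a) = τ (i.succAbove a) :=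
  congrArg Subtype.val ((finSuccAboveEquiv (τ i)).apply_symm_apply
    ⟨τ (i.succAbove a), τ.injective.ne (i.succAbove_ne a)⟩)

theorem deletion_lt_deletion_iff (i : Fin (k + 1)) (a b : Fin k) :
    deletion τ i a < deletion τ i b ↔ τ (i.succAbove a) < τ (i.succAbove b) := by
  rw [← succAbove_deletion, ← succAbove_deletion, (Fin.strictMono_succAbove _).lt_iff_lt]

theorem isOcc_deletion_succAbove (i : Fin (k + 1)) : IsOcc (deletion τ i) τ i.succAbove :=
  ⟨Fin.strictMono_succAbove i, deletion_lt_deletion_iff τ i⟩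

variable {τ}

theorem deletion_eq_of_pathGraph_adj {i j : Fin (k + 1)} (hpos : (pathGraph (k + 1)).Adj i j)
    (hval : (pathGraph (k + 1)).Adj (τ i) (τ j)) : deletion τ i = deletion τ j := by
  ext1 a
  apply Fin.succAbove_right_injective (p := τ i)
  calc (τ i).succAbove (deletion τ i a)
      = τ (i.succAbove a) := succAbove_deletion τ i a
    _ = τ (swap i j (j.succAbove a)) := by rw [succAbove_eq_swap_of_pathGraph_adj hpos]
    _ = swap (τ i) (τ j) (τ (j.succAbove a)) := τ.injective.map_swap _ _ _
    _ = swap (τ i) (τ j) ((τ j).succAbove (deletion τ j a)) := by rw [succAbove_deletion]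
    _ = (τ i).succAbove (deletion τ j a) := (succAbove_eq_swap_of_pathGraph_adj hval _).symm

theorem exists_pathGraph_adj_of_deletion_eq {i j : Fin (k + 1)} (hij : i ≠ j)
    (h : deletion τ i = deletion τ j) :
    ∃ i', (pathGraph (k + 1)).Adj i i' ∧ (pathGraph (k + 1)).Adj (τ i) (τ i') := by
  obtain ⟨a, rfl⟩ := Fin.exists_succAbove_eq hij
  refine ⟨(j.succAbove a).succAbove a, pathGraph_adj_succAbove j a, ?_⟩
  rw [← succAbove_deletion τ (j.succAbove a) a, h, ← succAbove_deletion τ j a]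
  exact pathGraph_adj_succAbove _ _

theorem forall_deletion_eq_imp_eq_iff {i : Fin (k + 1)} :
    (∀ j, deletion τ i = deletion τ j → i = j) ↔
      ∀ i', (pathGraph (k + 1)).Adj i i' → ¬ (pathGraph (k + 1)).Adj (τ i) (τ i') := by
  constructor
  · intro h i' hpos hval
    exact hpos.ne (h i' (deletion_eq_of_pathGraph_adj hpos hval))
  · intro h j hdel
    by_contra hij
    obtain ⟨i', hpos, hval⟩ := exists_pathGraph_adj_of_deletion_eq hij hdel
    exact h i' hpos hval

end Deletion

section Avoidance

variable {k n : ℕ} {τ : Perm (Fin (k + 1))} {i : Fin (k + 1)} {π : Perm (Fin n)}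

theorem avoidsHat_self : AvoidsHat τ i τ :=
  fun _ _ _ => ⟨id, IsOcc.refl τ, by simp⟩

theorem AvoidsBar.avoidsHat (hbar : AvoidsBar τ i π) : AvoidsHat τ i π := by
  intro g hg hocc
  obtain ⟨h, hh, hext⟩ := hbar g hg hocc
  exact ⟨h, hh, Set.range_subset_range_iff_exists_comp.2 ⟨i.succAbove, (funext hext).symm⟩⟩

theorem IsOcc.exists_deletion_of_range_subset {h : Fin (k + 1) → Fin n} {g : Fin k → Fin n}
    (hh : IsOcc τ π h) (hg : StrictMono g) (hsub : Set.range g ⊆ Set.range h) :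
    ∃ j : Fin (k + 1), g = h ∘ j.succAbove ∧ IsOcc (deletion τ j) π g := by
  obtain ⟨f, rfl⟩ := Set.range_subset_range_iff_exists_comp.1 hsub
  have hf : StrictMono f := fun _ _ hab => hh.1.lt_iff_lt.1 (hg hab)
  obtain ⟨j, rfl⟩ := exists_eq_succAbove_of_strictMono hf
  exact ⟨j, rfl, hh.comp (isOcc_deletion_succAbove τ j)⟩

theorem AvoidsHat.avoidsBar (hi : ∀ j, deletion τ i = deletion τ j → i = j)
    (hhat : AvoidsHat τ i π) : AvoidsBar τ i π := by
  intro g hg hocc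
  have hgi : IsOcc (deletion τ i) π g :=
    ⟨hg, fun a b => (deletion_lt_deletion_iff τ i a b).trans (hocc a b)⟩
  obtain ⟨h, hh, hsub⟩ := hhat g hg hocc
  obtain ⟨j, hgj, hocc_j⟩ := hh.exists_deletion_of_range_subset hg hsub
  obtain rfl : i = j := hi j (hgi.pattern_unique hocc_j)
  exact ⟨h, hh, fun a => (congrFun hgj a).symm⟩

theorem AvoidsBar.eq_of_deletion_eq (hbar : AvoidsBar τ i τ) {j : Fin (k + 1)}
    (hdel : deletion τ i = deletion τ j) : i = j := by
  obtain ⟨h, hh, hext⟩ := hbar j.succAbove (Fin.strictMono_succAbove j) fun a b => by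
    rw [← deletion_lt_deletion_iff, hdel, deletion_lt_deletion_iff]
  apply Fin.succAbove_left_injective
  funext a
  rw [← hext a, hh.1.apply_eq]

theorem forall_setOf_avoidsHat_eq_setOf_avoidsBar_iff :
    (∀ n : ℕ, 1 ≤ n → {π : Perm (Fin n) | AvoidsHat τ i π} = {π | AvoidsBar τ i π}) ↔
      ∀ j, deletion τ i = deletion τ j → i = j := by
  constructor
  · intro H j
    have hbar : τ ∈ {π | AvoidsBar τ i π} := H (k + 1) k.succ_pos ▸ avoidsHat_self
    exact AvoidsBar.eq_of_deletion_eq hbar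
  · intro hi n _
    exact Set.ext fun π => ⟨AvoidsHat.avoidsBar hi, AvoidsBar.avoidsHat⟩

end Avoidance

/-- Proposition `equ`. For a pattern `τ` of length `k + 1 ≥ 2` with marked
index `i`: `S_n(τ̂_(i)) = S_n(τ̄_(i))` for all `n = 1, 2, …` if and only if the marked entry
`τ_i` differs from each of `τ_{i−1} − 1`, `τ_{i−1} + 1`, `τ_{i+1} − 1`, `τ_{i+1} + 1`
(the conditions being vacuous when the neighbour `i'` of `i` does not exist; here `i'` ranges
over the neighbouring positions of `i`, i.e. those with `i' + 1 = i` or `i + 1 = i'`). -/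
theorem stmt3 {k : ℕ} (hk : 1 ≤ k) (τ : Equiv.Perm (Fin (k + 1))) (i : Fin (k + 1)) :
    (∀ n : ℕ, 1 ≤ n →
        {π : Equiv.Perm (Fin n) | AvoidsHat τ i π}
          = {π : Equiv.Perm (Fin n) | AvoidsBar τ i π}) ↔
    (∀ i' : Fin (k + 1), ((i' : ℕ) + 1 = (i : ℕ) ∨ (i : ℕ) + 1 = (i' : ℕ)) →
      (τ i' : ℕ) ≠ (τ i : ℕ) + 1 ∧ (τ i : ℕ) ≠ (τ i' : ℕ) + 1) := by
  rw [forall_setOf_avoidsHat_eq_setOf_avoidsBar_iff, forall_deletion_eq_imp_eq_iff]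
  refine forall_congr' fun i' => ?_
  rw [pathGraph_adj, pathGraph_adj]
  omega
end

section
/- Let π = π_1⋯π_n ∈ S_n(132) and let D = φ(π) be its image under the standard bijection φ. For each i let h_i be the number of entries of π that occur after π_i and are greater than π_i. Then reading the entry π_i produces a peak of D (i.e., the i-th down-step of D is immediately preceded by an up-step) if and only if π_i is a left-to-right minimum of π, and in that case the height of this peak is h_i + 1. -/
/-- `π` avoids the pattern 132: no subsequence `π_a π_b π_c` (`a < b < c`) satisfies
`π_a < π_c < π_b`. -/
def Avoids132 {n : ℕ} (π : Equiv.Perm (Fin n)) : Prop :=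
  ¬ ∃ a b c : Fin n, a < b ∧ b < c ∧ π a < π c ∧ π c < π b

/-- `h_i`: the number of entries of `π` occurring after `π_i` and greater than `π_i`. -/
def hstat {n : ℕ} (π : Equiv.Perm (Fin n)) (i : Fin n) : ℕ :=
  (Finset.univ.filter fun j => i < j ∧ π i < π j).card

/-- The height of the path `φ(π)` just before the `i`-th entry is read
(`h_{i-1}`, and `0` for `i = 0`). -/
def prevH {n : ℕ} (π : Equiv.Perm (Fin n)) (i : Fin n) : ℕ :=
  if _h : (i : ℕ) = 0 then 0
  else hstat π ⟨(i : ℕ) - 1, lt_of_le_of_lt (Nat.sub_le _ _) i.isLt⟩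

/-- The standard bijection `φ` from `S_n(132)` to Dyck `n`-paths, as a word over
`{u, d}` (`true` = up-step, `false` = down-step): reading `π` from left to right, when `π_i` is
read, append up-steps until the path reaches height `h_i + 1`, then append one down-step. -/
def phi {n : ℕ} (π : Equiv.Perm (Fin n)) : List Bool :=
  (List.ofFn fun i : Fin n =>
    List.replicate (hstat π i + 1 - prevH π i) true ++ [false]).flatten

/-- `π_i` is a left-to-right minimum of `π`. -/
def IsLTRMin {n : ℕ} (π : Equiv.Perm (Fin n)) (i : Fin n) : Prop :=
  ∀ j : Fin n, j < i → π i < π j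

/-- The position (0-indexed) in the word `w` of its `i`-th down-step (`i` counted from `0`). -/
def nthDown (w : List Bool) (i : ℕ) : ℕ := (w.findIdxs fun b => !b).getD i 0

/-!
Reading `π_i` produces a peak exactly when at least one up-step is appended, i.e. when
`h_{i-1} ≤ h_i`. If `π_{i-1} < π_i`, then avoidance of 132 forces every later entry greater than
`π_{i-1}` to be `π_i` itself or greater than `π_i`, so `h_{i-1} = h_i + 1` and no up-step is
appended. If `π_i < π_{i-1}`, then `h_{i-1} ≤ h_i`, and avoidance of 132 makes `π_i` smaller than
all the entries before it. In both cases `h_{i-1} ≤ h_i + 1`, so the path does reach height exactly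
`h_i + 1` before each down-step, peak or not.
-/

section Words

theorem nthDown_append_false_cons (A B : List Bool) :
    nthDown (A ++ false :: B) (A.count false) = A.length := by
  have hcount : A.count false = (A.findIdxs fun b => !b).length := by
    rw [List.length_findIdxs, List.count]
    congr 1
    funext b
    cases b <;> rfl
  rw [nthDown, List.findIdxs_append, List.findIdxs_cons, hcount]
  simp

theorem one_le_length_and_getD_append_eq_true_iff (A B : List Bool) :
    (1 ≤ A.length ∧ (A ++ B).getD (A.length - 1) false = true) ↔ A.getLast? = some true := by
  rcases A.eq_nil_or_concat with rfl | ⟨Q, b, rfl⟩ <;> simp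

/-- The word `u^{k_0} d u^{k_1} d ⋯` over `{u, d}` in which the numbers `k_0, k_1, …` of `ks` are
the lengths of the runs of up-steps before the successive down-steps. -/
def pathOfRuns (ks : List ℕ) : List Bool :=
  ks.flatMap fun k => List.replicate k true ++ [false]

theorem count_false_pathOfRuns (ks : List ℕ) : (pathOfRuns ks).count false = ks.length := by
  simp [pathOfRuns, List.count_flatMap, Function.comp_def, List.count_replicate]

theorem count_true_pathOfRuns (ks : List ℕ) : (pathOfRuns ks).count true = ks.sum := by
  simp [pathOfRuns, List.count_flatMap, Function.comp_def]

theorem getLast?_pathOfRuns_append_replicate_eq_some_true_iff (ks : List ℕ) (k : ℕ) :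
    (pathOfRuns ks ++ List.replicate k true).getLast? = some true ↔ 0 < k := by
  rcases k.eq_zero_or_pos with rfl | hk
  · rcases ks.eq_nil_or_concat with rfl | ⟨ls, l, rfl⟩ <;> simp [pathOfRuns]
  · simp [List.getLast?_replicate, hk, hk.ne']

variable {ks : List ℕ} {i : ℕ} (hi : i < ks.length)
include hi

theorem pathOfRuns_eq_append_false_cons :
    pathOfRuns ks = (pathOfRuns (ks.take i) ++ List.replicate ks[i] true) ++
      false :: pathOfRuns (ks.drop (i + 1)) := by
  conv_lhs => rw [← List.take_append_drop i ks, List.drop_eq_getElem_cons hi]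
  simp only [pathOfRuns, List.flatMap_append, List.flatMap_cons, List.append_assoc,
    List.cons_append, List.nil_append]

theorem nthDown_pathOfRuns :
    nthDown (pathOfRuns ks) i = (pathOfRuns (ks.take i) ++ List.replicate ks[i] true).length := by
  have hcount : (pathOfRuns (ks.take i) ++ List.replicate ks[i] true).count false = i := by
    simp [count_false_pathOfRuns, List.count_replicate, hi.le]
  have hpos := nthDown_append_false_cons (pathOfRuns (ks.take i) ++ List.replicate ks[i] true)
    (pathOfRuns (ks.drop (i + 1)))
  rwa [hcount, ← pathOfRuns_eq_append_false_cons hi] at hpos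

theorem take_nthDown_pathOfRuns :
    (pathOfRuns ks).take (nthDown (pathOfRuns ks) i) =
      pathOfRuns (ks.take i) ++ List.replicate ks[i] true := by
  rw [nthDown_pathOfRuns hi, pathOfRuns_eq_append_false_cons hi, List.take_left]

theorem count_false_take_nthDown_pathOfRuns :
    ((pathOfRuns ks).take (nthDown (pathOfRuns ks) i)).count false = i := by
  simp [take_nthDown_pathOfRuns hi, count_false_pathOfRuns, List.count_replicate, hi.le]

theorem count_true_take_nthDown_pathOfRuns :
    ((pathOfRuns ks).take (nthDown (pathOfRuns ks) i)).count true = (ks.take (i + 1)).sum := by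
  simp [take_nthDown_pathOfRuns hi, count_true_pathOfRuns, List.sum_take_succ _ _ hi]

theorem peak_pathOfRuns_iff :
    (1 ≤ nthDown (pathOfRuns ks) i ∧
      (pathOfRuns ks).getD (nthDown (pathOfRuns ks) i - 1) false = true) ↔ 0 < ks[i] := by
  rw [nthDown_pathOfRuns hi, pathOfRuns_eq_append_false_cons hi,
    one_le_length_and_getD_append_eq_true_iff,
    getLast?_pathOfRuns_append_replicate_eq_some_true_iff]

end Words

section Permutations

variable {n : ℕ} {π : Equiv.Perm (Fin n)} {i j : Fin n}

theorem hstat_le_hstat_of_covBy (hji : j ⋖ i) (h : π i < π j) : hstat π j ≤ hstat π i := by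
  refine Finset.card_le_card (Finset.monotone_filter_right _ fun a _ ⟨hja, hπa⟩ => ?_)
  have hai : a ≠ i := by
    rintro rfl
    exact h.not_gt hπa
  exact ⟨(hji.ge_of_gt hja).lt_of_ne' hai, h.trans hπa⟩

theorem Avoids132.hstat_eq_hstat_add_one (hπ : Avoids132 π) (hji : j ⋖ i) (h : π j < π i) :
    hstat π j = hstat π i + 1 := by
  have hinsert : (Finset.univ.filter fun a => j < a ∧ π j < π a) =
      insert i (Finset.univ.filter fun a => i < a ∧ π i < π a) := by
    ext a
    simp only [Finset.mem_filter, Finset.mem_univ, true_and, Finset.mem_insert]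
    constructor
    · rintro ⟨hja, hπa⟩
      refine (hji.ge_of_gt hja).eq_or_lt'.imp_right fun hia => ⟨hia, ?_⟩
      by_contra hle
      exact hπ ⟨j, i, a, hji.lt, hia, hπa,
        (not_lt.mp hle).lt_of_ne (π.injective.ne hia.ne')⟩
    · rintro (rfl | ⟨hia, hπa⟩)
      · exact ⟨hji.lt, h⟩
      · exact ⟨hji.lt.trans hia, h.trans hπa⟩
  rw [hstat, hinsert, Finset.card_insert_of_notMem (by simp), hstat]

theorem Avoids132.isLTRMin_iff_of_covBy (hπ : Avoids132 π) (hji : j ⋖ i) :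
    IsLTRMin π i ↔ π i < π j := by
  refine ⟨fun hmin => hmin j hji.lt, fun h a hai => ?_⟩
  rcases (hji.le_of_lt hai).eq_or_lt with rfl | haj
  · exact h
  · by_contra hle
    exact hπ ⟨a, j, i, haj, hji.lt, (not_lt.mp hle).lt_of_ne (π.injective.ne hai.ne), h⟩

theorem prevH_of_isMin (hi : IsMin i) : prevH π i = 0 := by
  have h0 : (i : ℕ) = 0 := Nat.le_zero.mp (hi (b := ⟨0, i.pos⟩) (Nat.zero_le _))
  exact dif_pos h0

theorem prevH_of_covBy (hji : j ⋖ i) : prevH π i = hstat π j := by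
  have hval : (j : ℕ) + 1 = i := Nat.covBy_iff_add_one_eq.mp (Fin.covBy_iff.mp hji)
  rw [prevH, dif_neg (by lia)]
  congr 1
  exact Fin.ext (by simp [← hval])

theorem Avoids132.prevH_le_hstat_add_one (hπ : Avoids132 π) (i : Fin n) :
    prevH π i ≤ hstat π i + 1 := by
  by_cases hi : IsMin i
  · simp [prevH_of_isMin hi]
  · obtain ⟨j, hji⟩ := exists_covBy_of_wellFoundedGT hi
    rw [prevH_of_covBy hji]
    rcases (π.injective.ne hji.ne).lt_or_gt with hasc | hdesc
    · exact (hπ.hstat_eq_hstat_add_one hji hasc).le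
    · exact (hstat_le_hstat_of_covBy hji hdesc).trans (Nat.le_succ _)

theorem Avoids132.prevH_le_hstat_iff (hπ : Avoids132 π) (i : Fin n) :
    prevH π i ≤ hstat π i ↔ IsLTRMin π i := by
  by_cases hi : IsMin i
  · have hmin : IsLTRMin π i := fun j hji => (hi.not_lt hji).elim
    simp [prevH_of_isMin hi, hmin]
  · obtain ⟨j, hji⟩ := exists_covBy_of_wellFoundedGT hi
    rw [prevH_of_covBy hji, hπ.isLTRMin_iff_of_covBy hji]
    rcases (π.injective.ne hji.ne).lt_or_gt with hasc | hdesc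
    · simp [hπ.hstat_eq_hstat_add_one hji hasc, hasc.le]
    · simp [hstat_le_hstat_of_covBy hji hdesc, hdesc]

/-- The list whose `i`-th term is the number of up-steps of `φ(π)` appended when `π_i` is read.
The subtraction is truncated, as in `phi`; the truncation has no effect when `π` avoids 132. -/
def upRuns (π : Equiv.Perm (Fin n)) : List ℕ :=
  List.ofFn fun i => hstat π i + 1 - prevH π i

theorem phi_eq_pathOfRuns (π : Equiv.Perm (Fin n)) : phi π = pathOfRuns (upRuns π) := by
  rw [phi, pathOfRuns, upRuns, List.flatMap_def, List.map_ofFn]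
  rfl

theorem sum_take_succ_upRuns (π : Equiv.Perm (Fin n)) (i : Fin n) :
    ((upRuns π).take (i + 1)).sum =
      ((upRuns π).take i).sum + (hstat π i + 1 - prevH π i) := by
  rw [List.sum_take_succ _ _ (by simp [upRuns])]
  simp [upRuns]

theorem Avoids132.sum_take_upRuns (hπ : Avoids132 π) (i : Fin n) :
    ((upRuns π).take (i + 1)).sum = i + (hstat π i + 1) := by
  obtain ⟨m, hm⟩ := i
  induction m with
  | zero =>
    have hmin : IsMin (⟨0, hm⟩ : Fin n) := fun _ _ => Nat.zero_le _
    rw [sum_take_succ_upRuns, prevH_of_isMin hmin]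
    simp
  | succ m ih =>
    have hm' : m < n := m.lt_succ_self.trans hm
    have hcov : (⟨m, hm'⟩ : Fin n) ⋖ ⟨m + 1, hm⟩ := by simp
    have hle := hπ.prevH_le_hstat_add_one ⟨m + 1, hm⟩
    rw [prevH_of_covBy hcov] at hle
    rw [sum_take_succ_upRuns, prevH_of_covBy hcov, ih hm']
    lia

end Permutations

theorem stmt6_general {n : ℕ} (π : Equiv.Perm (Fin n)) (hπ : Avoids132 π) (i : Fin n) :
    ((1 ≤ nthDown (phi π) i ∧ (phi π).getD (nthDown (phi π) i - 1) false = true)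
        ↔ IsLTRMin π i) ∧
      ((phi π).take (nthDown (phi π) i)).count true
        = ((phi π).take (nthDown (phi π) i)).count false + (hstat π i + 1) := by
  have hi : (i : ℕ) < (upRuns π).length := by simp [upRuns]
  rw [phi_eq_pathOfRuns, peak_pathOfRuns_iff hi, count_true_take_nthDown_pathOfRuns hi,
    count_false_take_nthDown_pathOfRuns hi, hπ.sum_take_upRuns]
  refine ⟨?_, rfl⟩
  rw [← hπ.prevH_le_hstat_iff]
  simp [upRuns]

/-- Lemma `sta`. Let `π ∈ S_n(132)` and `D = φ(π)`. Reading the entry `π_i`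
produces a peak of `D` — i.e. the `i`-th down-step of `D` is immediately preceded by an
up-step — if and only if `π_i` is a left-to-right minimum of `π`; and in that case the height of
this peak (the number of `u`'s minus the number of `d`'s in the prefix ending with that up-step)
is `h_i + 1`. -/
theorem stmt6 {n : ℕ} (π : Equiv.Perm (Fin n)) (hπ : Avoids132 π) (i : Fin n) :
    ((1 ≤ nthDown (phi π) i ∧ (phi π).getD (nthDown (phi π) i - 1) false = true)
        ↔ IsLTRMin π i) ∧
    (IsLTRMin π i →
      ((phi π).take (nthDown (phi π) i)).count true
        = ((phi π).take (nthDown (phi π) i)).count false + (hstat π i + 1)) :=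
  ⟨(stmt6_general π hπ i).1, fun _ => (stmt6_general π hπ i).2⟩
end

section
/- For every positive integer n, the number of permutations of length n avoiding 132 and avoiding the hatted pattern 1̂2 equals the n-th Fine number F_n; equivalently, |S_n(132, 1̂2)| equals the number of Dyck n-paths with no peak at height 1. -/
/-- `w` is a Dyck `n`-path: a word of length `2n` over `{u, d}` (`true` = up, `false` = down)
with `n` up-steps, in which every prefix contains at least as many `u`'s as `d`'s. -/
def IsDyckPath (n : ℕ) (w : List Bool) : Prop :=
  w.length = 2 * n ∧ w.count true = n ∧
    ∀ p : ℕ, (w.take p).count false ≤ (w.take p).count true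

/-- `w` has a peak (an occurrence of the factor `ud`) at height `p`: the height is the number of
`u`'s minus the number of `d`'s in the prefix ending with the `u` of that occurrence. -/
def HasPeakAtHeight (w : List Bool) (p : ℕ) : Prop :=
  ∃ q : ℕ, q + 1 < w.length ∧ w.getD q false = true ∧ w.getD (q + 1) true = false ∧
    (w.take (q + 1)).count true = (w.take (q + 1)).count false + p

/-!
Splitting a 132-avoiding permutation at its greatest entry, and a Dyck path at its first return to
the axis, encodes both kinds of objects as binary trees. In a word `L m R` with greatest entry `m`
and every entry of `L` above every entry of `R`, the entries of `L` are the smaller halves of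
increasing pairs ending in `m`, so that `m` itself is covered as soon as `L` is nonempty, while an
entry of `R` can only be covered within `R`. In a path `u L d R` the peaks at height 1 are those of
`R`, together with `ud` itself if `L` is empty. Hence both restrictions say that every node on the
right spine of the tree has a nonempty left subtree. With `C` the Catalan series, the generating
function `F` of such trees satisfies `F = 1 + X (C - 1) F`, which together with `C = 1 + X C ^ 2`
gives `C + 1 = 2 F + X F`, the recurrence of the Fine numbers.
-/

open BinaryTree Finset PowerSeries
open scoped List

/-- A binary tree is *fine* if every node of its right spine has a nonempty left subtree; the fine
trees with `n` nodes are counted by the `n`-th Fine number. -/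
def IsFineTree {α : Type*} : BinaryTree α → Prop
  | .nil => True
  | .node _ l r => l ≠ .nil ∧ IsFineTree r

open Classical in
/-- The fine trees with `n` nodes. -/
noncomputable def fineTrees (n : ℕ) : Finset (BinaryTree Unit) :=
  {t ∈ treesOfNumNodesEq n | IsFineTree t}

lemma mem_fineTrees {n : ℕ} {t : BinaryTree Unit} :
    t ∈ fineTrees n ↔ t.numNodes = n ∧ IsFineTree t := by
  simp [fineTrees]

lemma fineTrees_zero : fineTrees 0 = {nil} := by
  ext t
  cases t <;> simp [mem_fineTrees, IsFineTree, numNodes]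

lemma nil_notMem_pairwiseNode (A B : Finset (BinaryTree Unit)) : nil ∉ pairwiseNode A B := by
  simp [pairwiseNode]

lemma node_mem_pairwiseNode {A B : Finset (BinaryTree Unit)} {u : Unit} {l r : BinaryTree Unit} :
    node u l r ∈ pairwiseNode A B ↔ l ∈ A ∧ r ∈ B := by
  constructor
  · intro h
    obtain ⟨⟨l', r'⟩, hlr, heq⟩ := mem_map.1 h
    cases heq
    exact mem_product.1 hlr
  · exact fun h => mem_map.2 ⟨(l, r), mem_product.2 h, rfl⟩

lemma fineTrees_succ (n : ℕ) :
    fineTrees (n + 1) = (antidiagonal n).biUnion fun ij =>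
      pairwiseNode ((treesOfNumNodesEq ij.1).erase nil) (fineTrees ij.2) := by
  ext t
  cases t with
  | nil => simp [mem_fineTrees, numNodes]
  | node u l r =>
    simp only [mem_biUnion, node_mem_pairwiseNode, mem_fineTrees, mem_erase, numNodes,
      mem_treesOfNumNodesEq, IsFineTree, HasAntidiagonal.mem_antidiagonal, Prod.exists]
    grind

lemma card_biUnion_pairwiseNode {A : ℕ → Finset (BinaryTree Unit)}
    (hA : ∀ i, A i ⊆ treesOfNumNodesEq i) (B : ℕ → Finset (BinaryTree Unit)) (n : ℕ) :
    #((antidiagonal n).biUnion fun ij => pairwiseNode (A ij.1) (B ij.2)) =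
      ∑ ij ∈ antidiagonal n, #(A ij.1) * #(B ij.2) := by
  rw [card_biUnion]
  · simp only [card_map, card_product]
  · rintro ⟨i, j⟩ hij ⟨k, m⟩ hkm hne
    refine disjoint_left.2 fun t ht ht' => hne ?_
    cases t with
    | nil => exact absurd ht (nil_notMem_pairwiseNode _ _)
    | node u l r =>
      have hi := mem_treesOfNumNodesEq.1 (hA i (node_mem_pairwiseNode.1 ht).1)
      have hk := mem_treesOfNumNodesEq.1 (hA k (node_mem_pairwiseNode.1 ht').1)
      have hijn := HasAntidiagonal.mem_antidiagonal.1 hij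
      have hkmn := HasAntidiagonal.mem_antidiagonal.1 hkm
      simp only [Prod.mk.injEq]
      lia

lemma card_treesOfNumNodesEq_erase_nil (n : ℕ) :
    #((treesOfNumNodesEq n).erase nil) + (if n = 0 then 1 else 0) = catalan n := by
  rw [← treesOfNumNodesEq_card_eq_catalan, eq_comm]
  split_ifs with hn
  · simp [hn]
  · rw [erase_eq_of_notMem (by simpa [eq_comm] using hn), add_zero]

/-- The generating function of fine trees by number of nodes. -/
noncomputable def fineSeries : PowerSeries ℕ := .mk fun n => #(fineTrees n)

/-- The generating function of nonempty binary trees by number of nodes. -/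
noncomputable def nonemptyTreeSeries : PowerSeries ℕ :=
  .mk fun n => #((treesOfNumNodesEq n).erase nil)

lemma nonemptyTreeSeries_add_one : nonemptyTreeSeries + 1 = catalanSeries := by
  ext n
  simp only [map_add, nonemptyTreeSeries, coeff_mk, coeff_one, card_treesOfNumNodesEq_erase_nil,
    catalanSeries_coeff]

lemma fineSeries_eq : fineSeries = 1 + X * (nonemptyTreeSeries * fineSeries) := by
  ext n
  cases n with
  | zero => simp [fineSeries, fineTrees_zero]
  | succ n =>
    rw [map_add, coeff_succ_X_mul, coeff_mul, coeff_one, if_neg n.succ_ne_zero, zero_add]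
    simp only [fineSeries, nonemptyTreeSeries, coeff_mk, fineTrees_succ]
    exact card_biUnion_pairwiseNode (fun _ => erase_subset _ _) _ _

lemma catalanSeries_add_one : catalanSeries + 1 = 2 * fineSeries + X * fineSeries := by
  apply PowerSeries.map_injective (Nat.castRingHom ℤ) Nat.cast_injective
  have hC := congrArg (PowerSeries.map (Nat.castRingHom ℤ)) catalanSeries_sq_mul_X_add_one
  have hF := congrArg (PowerSeries.map (Nat.castRingHom ℤ)) fineSeries_eq
  have hN := congrArg (PowerSeries.map (Nat.castRingHom ℤ)) nonemptyTreeSeries_add_one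
  simp only [map_add, map_mul, map_pow, map_one, map_X, map_ofNat] at hC hF hN ⊢
  generalize PowerSeries.map (Nat.castRingHom ℤ) catalanSeries = c at *
  generalize PowerSeries.map (Nat.castRingHom ℤ) fineSeries = f at *
  generalize PowerSeries.map (Nat.castRingHom ℤ) nonemptyTreeSeries = m at *
  subst hN
  linear_combination (-(m + 2)) * hF - f * hC

lemma catalan_succ_eq_two_mul_card_fineTrees_add (n : ℕ) :
    catalan (n + 1) = 2 * #(fineTrees (n + 1)) + #(fineTrees n) := by
  have h := congrArg (coeff (n + 1)) catalanSeries_add_one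
  simpa [two_mul, coeff_one, coeff_succ_X_mul, fineSeries] using h

lemma card_fineTrees_eq_of_catalan_eq {F : ℕ → ℕ} (hF0 : F 0 = 1)
    (hF : ∀ m, 1 ≤ m → catalan m = 2 * F m + F (m - 1)) (n : ℕ) : #(fineTrees n) = F n := by
  induction n with
  | zero => rw [fineTrees_zero, card_singleton, hF0]
  | succ n ih =>
    have hrec := hF (n + 1) n.succ_pos
    rw [catalan_succ_eq_two_mul_card_fineTrees_add, ih, Nat.add_sub_cancel] at hrec
    lia

section Words

variable {α : Type*}

lemma pair_sublist_cons_iff {a b m : α} {R : List α} :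
    [a, b] <+ (m :: R) ↔ a = m ∧ b ∈ R ∨ [a, b] <+ R := by
  grind

lemma pair_sublist_append_iff {a b : α} {L R : List α} :
    [a, b] <+ (L ++ R) ↔ [a, b] <+ L ∨ a ∈ L ∧ b ∈ R ∨ [a, b] <+ R := by
  induction L with
  | nil => simp
  | cons x L ih => grind

/-- The word `w` avoids the pattern 132. -/
def WordAvoids132 [LT α] (w : List α) : Prop :=
  w.Triplewise fun a b c => ¬ (a < c ∧ c < b)

/-- The word `w` avoids the hatted pattern 1̂2: each of its entries belongs to an increasing
subsequence of length two. -/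
def WordAvoidsHat12 [LT α] (w : List α) : Prop :=
  ∀ x ∈ w, ∃ a b, [a, b] <+ w ∧ a < b ∧ (x = a ∨ x = b)

variable [Preorder α] {L R : List α} {m : α}

lemma wordAvoids132_append_cons (hL : ∀ a ∈ L, a < m) (hR : ∀ b ∈ R, b < m) :
    WordAvoids132 (L ++ m :: R) ↔
      WordAvoids132 L ∧ WordAvoids132 R ∧ ∀ a ∈ L, ∀ b ∈ R, ¬ a < b := by
  simp only [WordAvoids132, List.triplewise_append, List.triplewise_cons, List.pairwise_cons]
  simp only [List.pairwise_iff_forall_sublist]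
  constructor
  · rintro ⟨avL, ⟨-, avR⟩, hLR, -⟩
    exact ⟨avL, avR, fun a ha b hb hab => (hLR a ha).1 b hb ⟨hab, hR b hb⟩⟩
  · rintro ⟨avL, avR, hLR⟩
    refine ⟨avL, ⟨fun {b c} hbc h => ?_, avR⟩, fun a ha => ⟨fun b hb h => hLR a ha b hb h.1,
      fun {b c} hbc h => hLR a ha c (hbc.subset (by simp)) h.1⟩, fun c hc {a b} hab h => ?_⟩
    · exact lt_asymm h.1 (hR c (hbc.subset (by simp)))
    · obtain ⟨ha, hb⟩ : a ∈ L ∧ b ∈ L := ⟨hab.subset (by simp), hab.subset (by simp)⟩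
      rcases List.mem_cons.1 hc with rfl | hc
      · exact lt_asymm h.2 (hL b hb)
      · exact hLR a ha c hc h.1

lemma mem_or_sublist_of_pair_sublist_append_cons (hR : ∀ b ∈ R, b < m)
    (hLR : ∀ a ∈ L, ∀ b ∈ R, b < a) {a b : α} (hab : [a, b] <+ L ++ m :: R) (hlt : a < b) :
    a ∈ L ∧ (b ∈ L ∨ b = m) ∨ [a, b] <+ R := by
  rcases pair_sublist_append_iff.1 hab with hab | ⟨ha, hb⟩ | hab
  · exact .inl ⟨hab.subset (by simp), .inl (hab.subset (by simp))⟩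
  · rcases List.mem_cons.1 hb with rfl | hb
    · exact .inl ⟨ha, .inr rfl⟩
    · exact (lt_asymm hlt (hLR a ha b hb)).elim
  · rcases pair_sublist_cons_iff.1 hab with ⟨rfl, hb⟩ | hab
    · exact (lt_asymm hlt (hR b hb)).elim
    · exact .inr hab

lemma wordAvoidsHat12_append_cons (hL : ∀ a ∈ L, a < m) (hR : ∀ b ∈ R, b < m)
    (hLR : ∀ a ∈ L, ∀ b ∈ R, b < a) :
    WordAvoidsHat12 (L ++ m :: R) ↔ L ≠ [] ∧ WordAvoidsHat12 R := by
  have pair_of_mem {a} (ha : a ∈ L) : [a, m] <+ (L ++ m :: R) :=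
    pair_sublist_append_iff.2 (.inr (.inl ⟨ha, List.mem_cons_self⟩))
  refine ⟨fun h => ⟨?_, fun x hx => ?_⟩, ?_⟩
  · rintro rfl
    obtain ⟨a, b, hab, hlt, hm⟩ := h m (by simp)
    have hab := (mem_or_sublist_of_pair_sublist_append_cons hR hLR hab hlt).resolve_left (by simp)
    have hmR : m ∈ R := by rcases hm with rfl | rfl <;> exact hab.subset (by simp)
    exact lt_irrefl m (hR m hmR)
  · obtain ⟨a, b, hab, hlt, hxab⟩ := h x (by simp [hx])
    rcases mem_or_sublist_of_pair_sublist_append_cons hR hLR hab hlt with ⟨ha, hb⟩ | hab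
    · have hxL : x ∈ L ∨ x = m := by rcases hxab with rfl | rfl <;> tauto
      rcases hxL with hxL | rfl
      · exact (lt_irrefl x (hLR x hxL x hx)).elim
      · exact (lt_irrefl x (hR x hx)).elim
    · exact ⟨a, b, hab, hlt, hxab⟩
  · rintro ⟨hne, avR⟩ x hx
    rcases List.mem_append.1 hx with hxL | hx
    · exact ⟨x, m, pair_of_mem hxL, hL x hxL, .inl rfl⟩
    · rcases List.mem_cons.1 hx with rfl | hxR
      · obtain ⟨a, ha⟩ := List.exists_mem_of_ne_nil L hne
        exact ⟨a, x, pair_of_mem ha, hL a ha, .inr rfl⟩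
      · obtain ⟨a, b, hab, hlt⟩ := avR x hxR
        exact ⟨a, b, hab.trans (List.sublist_append_of_sublist_right (.cons _ (.refl R))), hlt⟩

end Words

/-- The word on the letters `s, …, s + n - 1` with which a binary tree with `n` nodes is labelled:
the root carries the greatest letter, the nodes of its right subtree the least ones. -/
def treeWord {α : Type*} (s : ℕ) : BinaryTree α → List ℕ
  | .nil => []
  | .node _ l r => treeWord (s + r.numNodes) l ++ (s + r.numNodes + l.numNodes) :: treeWord s r

section TreeWord

variable {α : Type*}

lemma treeWord_perm (s : ℕ) (t : BinaryTree α) :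
    treeWord s t ~ List.range' s t.numNodes := by
  induction t generalizing s with
  | nil => simp [treeWord, numNodes]
  | node _ l r ihl ihr =>
    calc treeWord (s + r.numNodes) l ++ (s + r.numNodes + l.numNodes) :: treeWord s r
      _ ~ treeWord s r ++ (treeWord (s + r.numNodes) l ++ [s + r.numNodes + l.numNodes]) := by
        grind
      _ ~ List.range' s r.numNodes ++
          (List.range' (s + r.numNodes) l.numNodes ++ [s + r.numNodes + l.numNodes]) :=
        (ihr s).append ((ihl _).append_right _)
      _ = List.range' s (l.numNodes + r.numNodes + 1) := by
        rw [← List.range'_1_concat, List.range'_append_1]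
        congr 1
        lia

lemma mem_treeWord {s x : ℕ} {t : BinaryTree α} :
    x ∈ treeWord s t ↔ s ≤ x ∧ x < s + t.numNodes := by
  rw [(treeWord_perm s t).mem_iff, List.mem_range'_1]

lemma length_treeWord (s : ℕ) (t : BinaryTree α) : (treeWord s t).length = t.numNodes := by
  rw [(treeWord_perm s t).length_eq, List.length_range']

lemma treeWord_eq_nil {s : ℕ} {t : BinaryTree α} : treeWord s t = [] ↔ t = .nil := by
  cases t <;> simp [treeWord]

lemma wordAvoids132_treeWord (s : ℕ) (t : BinaryTree α) : WordAvoids132 (treeWord s t) := by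
  induction t generalizing s with
  | nil => exact .nil
  | node _ l r ihl ihr =>
    rw [treeWord, wordAvoids132_append_cons]
    · refine ⟨ihl _, ihr _, fun a ha b hb => ?_⟩
      rw [mem_treeWord] at ha hb
      lia
    all_goals
      intro a ha
      rw [mem_treeWord] at ha
      lia

lemma wordAvoidsHat12_treeWord {s : ℕ} {t : BinaryTree α} :
    WordAvoidsHat12 (treeWord s t) ↔ IsFineTree t := by
  induction t generalizing s with
  | nil => simp [treeWord, IsFineTree, WordAvoidsHat12]
  | node _ l r _ ihr =>
    rw [treeWord, wordAvoidsHat12_append_cons, ihr, IsFineTree, Ne, treeWord_eq_nil]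
    · intro a ha
      rw [mem_treeWord] at ha
      lia
    · intro a ha
      rw [mem_treeWord] at ha
      lia
    · intro a ha b hb
      rw [mem_treeWord] at ha hb
      lia

lemma treeWord_injective [Subsingleton α] (s : ℕ) :
    Function.Injective (treeWord s : BinaryTree α → List ℕ) := by
  intro t t' h
  induction t generalizing t' s with
  | nil => exact (treeWord_eq_nil.1 h.symm).symm
  | node u l r ihl ihr =>
    cases t' with
    | nil => exact treeWord_eq_nil.1 h
    | node u' l' r' =>
      have hn := congrArg List.length h
      simp only [length_treeWord, numNodes] at hn
      rw [treeWord, treeWord,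
        show s + r'.numNodes + l'.numNodes = s + r.numNodes + l.numNodes by lia] at h
      obtain ⟨hl, -, hr⟩ := (List.append_cons_inj_of_notMem
        (by rw [mem_treeWord]; lia) (by rw [mem_treeWord]; lia)).1 h
      obtain rfl := ihr s hr
      obtain rfl := ihl _ hl
      rw [Subsingleton.elim u u']

end TreeWord

lemma perm_range'_of_append_perm_range' {s : ℕ} {L R : List ℕ}
    (h : R ++ L ~ List.range' s (R.length + L.length))
    (hLR : ∀ b ∈ R, ∀ a ∈ L, b ≤ a) :
    R ~ List.range' s R.length ∧ L ~ List.range' (s + R.length) L.length := by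
  -- As `R` lies below `L`, sorting both parts separately sorts `R ++ L`.
  set R' := R.insertionSort (· ≤ ·)
  set L' := L.insertionSort (· ≤ ·)
  have hR : R' ~ R := List.perm_insertionSort _ R
  have hL : L' ~ L := List.perm_insertionSort _ L
  have hsorted : (R' ++ L').Pairwise (· ≤ ·) :=
    List.pairwise_append.2 ⟨List.pairwise_insertionSort _ R, List.pairwise_insertionSort _ L,
      fun b hb a ha => hLR b (hR.mem_iff.1 hb) a (hL.mem_iff.1 ha)⟩
  have heq : R' ++ L' = List.range' s R.length ++ List.range' (s + R.length) L.length := by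
    rw [List.range'_append_1]
    exact ((hR.append hL).trans h).eq_of_pairwise' hsorted List.pairwise_le_range'
  obtain ⟨hR', hL'⟩ := List.append_inj heq (by rw [hR.length_eq, List.length_range'])
  exact ⟨hR' ▸ hR.symm, hL' ▸ hL.symm⟩

lemma exists_treeWord_eq {s n : ℕ} {w : List ℕ} (hw : w ~ List.range' s n)
    (hav : WordAvoids132 w) : ∃ t : BinaryTree Unit, treeWord s t = w := by
  induction n using Nat.strong_induction_on generalizing s w with
  | _ n ih =>
    cases n with
    | zero => exact ⟨.nil, (List.perm_nil.1 hw).symm⟩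
    | succ m =>
      obtain ⟨L, R, rfl⟩ := List.append_of_mem (hw.mem_iff.2 (by simp : s + m ∈ _))
      have hLR : L ++ R ~ List.range' s m := by
        rw [List.range'_1_concat] at hw
        exact (List.perm_middle.symm.trans (hw.trans (List.perm_append_singleton _ _))).cons_inv
      have hlen : R.length + L.length = m := by simpa [add_comm] using hLR.length_eq
      have hlt (x) (hx : x ∈ L ++ R) : x < s + m := (List.mem_range'_1.1 (hLR.mem_iff.1 hx)).2
      obtain ⟨avL, avR, hLR_le⟩ := (wordAvoids132_append_cons
        (fun a ha => hlt a (by simp [ha])) (fun b hb => hlt b (by simp [hb]))).1 hav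
      obtain ⟨hR, hL⟩ := perm_range'_of_append_perm_range'
        (hlen ▸ List.perm_append_comm.trans hLR) (fun b hb a ha => not_lt.1 (hLR_le a ha b hb))
      obtain ⟨r, rfl⟩ := ih _ (by lia) hR avR
      obtain ⟨l, rfl⟩ := ih _ (by lia) hL avL
      rw [length_treeWord, length_treeWord] at hlen
      rw [length_treeWord]
      exact ⟨.node () l r, by rw [treeWord, ← hlen, add_assoc]⟩

lemma bijOn_treeWord (s n : ℕ) :
    Set.BijOn (treeWord s) {t : BinaryTree Unit | t.numNodes = n}
      {w | w ~ List.range' s n ∧ WordAvoids132 w} := by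
  refine ⟨?_, (treeWord_injective s).injOn, ?_⟩
  · rintro t rfl
    exact ⟨treeWord_perm s t, wordAvoids132_treeWord s t⟩
  · rintro w ⟨hw, hav⟩
    obtain ⟨t, rfl⟩ := exists_treeWord_eq hw hav
    exact ⟨t, by simpa [length_treeWord] using hw.length_eq, rfl⟩

section OneLine

variable {n : ℕ}

/-- The one-line notation of a permutation, with letters `0, …, n - 1`. -/
def oneLine (π : Equiv.Perm (Fin n)) : List ℕ :=
  List.ofFn fun i => (π i : ℕ)

lemma oneLine_perm (π : Equiv.Perm (Fin n)) : oneLine π ~ List.range n := by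
  have hid : List.ofFn (fun i : Fin n => (i : ℕ)) = List.range n := by
    rw [List.ofFn_eq_map, List.map_coe_finRange_eq_range]
  rw [← hid]
  exact π.ofFn_comp_perm _

lemma oneLine_injective : Function.Injective (oneLine (n := n)) := by
  intro π σ h
  ext i
  exact congrFun (List.ofFn_injective h) i

lemma exists_oneLine_eq {w : List ℕ} (hw : w ~ List.range n) :
    ∃ π : Equiv.Perm (Fin n), oneLine π = w := by
  obtain rfl : w.length = n := by rw [hw.length_eq, List.length_range]
  let f (i : Fin w.length) : Fin w.length :=
    ⟨w.get i, List.mem_range.1 (hw.mem_iff.1 (List.get_mem w i))⟩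
  have hf : f.Injective := fun i j hij =>
    (hw.nodup_iff.2 List.nodup_range).injective_get (Fin.mk.inj hij)
  exact ⟨.ofBijective f (Finite.injective_iff_bijective.1 hf), List.ofFn_get w⟩

lemma triplewise_ofFn {α : Type*} {f : Fin n → α} {p : α → α → α → Prop} :
    (List.ofFn f).Triplewise p ↔ ∀ a b c, a < b → b < c → p (f a) (f b) (f c) := by
  simp only [List.triplewise_iff_getElem, List.getElem_ofFn, List.length_ofFn]
  exact ⟨fun h a b c hab hbc => h a b c hab hbc c.2,
    fun h i j k hij hjk hk => h ⟨i, by lia⟩ ⟨j, by lia⟩ ⟨k, hk⟩ hij hjk⟩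

lemma pair_sublist_ofFn {α : Type*} {f : Fin n → α} {x y : α} :
    [x, y] <+ (List.ofFn f) ↔ ∃ a b, a < b ∧ f a = x ∧ f b = y := by
  have h : (List.ofFn f).Pairwise (fun x' y' => ¬ (x' = x ∧ y' = y)) ↔ _ := List.pairwise_ofFn
  rw [List.pairwise_iff_forall_sublist] at h
  grind

lemma wordAvoids132_oneLine {π : Equiv.Perm (Fin n)} :
    WordAvoids132 (oneLine π) ↔ Avoids132 π := by
  simp only [WordAvoids132, oneLine, triplewise_ofFn, Avoids132, Fin.val_fin_lt]
  push Not
  rfl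

lemma avoidsHat_one_zero_iff {π : Equiv.Perm (Fin n)} :
    AvoidsHat (1 : Equiv.Perm (Fin 2)) 0 π ↔
      ∀ i, ∃ a b, a < b ∧ π a < π b ∧ (i = a ∨ i = b) := by
  constructor
  · intro h i
    obtain ⟨g, ⟨hg, hocc⟩, hi⟩ := h (fun _ => i) (Subsingleton.strictMono _) fun a b => by
      simp [Subsingleton.elim a b]
    refine ⟨g 0, g 1, hg (by decide), (hocc 0 1).1 (by decide), ?_⟩
    obtain ⟨k, hk⟩ := hi ⟨0, rfl⟩
    fin_cases k
    · exact .inl hk.symm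
    · exact .inr hk.symm
  · intro h g _ _
    obtain ⟨a, b, hab, hπ, hi⟩ := h (g 0)
    refine ⟨![a, b], ⟨Fin.strictMono_iff_lt_succ.2 (by simpa using hab), fun x y => ?_⟩, ?_⟩
    · fin_cases x <;> fin_cases y <;> simp [hπ, hπ.le]
    · rintro _ ⟨k, rfl⟩
      obtain rfl := Subsingleton.elim k 0
      rcases hi with hi | hi
      · exact ⟨0, hi.symm⟩
      · exact ⟨1, hi.symm⟩

lemma wordAvoidsHat12_oneLine {π : Equiv.Perm (Fin n)} :
    WordAvoidsHat12 (oneLine π) ↔ AvoidsHat (1 : Equiv.Perm (Fin 2)) 0 π := by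
  have hval {i j : Fin n} : (π i : ℕ) = π j ↔ i = j := by
    rw [Fin.val_inj, EmbeddingLike.apply_eq_iff_eq]
  simp only [avoidsHat_one_zero_iff, WordAvoidsHat12, oneLine, pair_sublist_ofFn,
    List.forall_mem_ofFn_iff]
  refine forall_congr' fun i => ⟨?_, ?_⟩
  · rintro ⟨_, _, ⟨a, b, hab, rfl, rfl⟩, hlt, hi⟩
    exact ⟨a, b, hab, hlt, hi.imp hval.1 hval.1⟩
  · rintro ⟨a, b, hab, hlt, hi⟩
    exact ⟨π a, π b, ⟨a, b, hab, rfl, rfl⟩, hlt, hi.imp hval.2 hval.2⟩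

lemma bijOn_oneLine (n : ℕ) : Set.BijOn (oneLine (n := n)) {π | Avoids132 π}
    {w | w ~ List.range n ∧ WordAvoids132 w} := by
  refine ⟨fun π hπ => ⟨oneLine_perm π, wordAvoids132_oneLine.2 hπ⟩, oneLine_injective.injOn, ?_⟩
  rintro w ⟨hw, hav⟩
  obtain ⟨π, rfl⟩ := exists_oneLine_eq hw
  exact ⟨π, wordAvoids132_oneLine.1 hav, rfl⟩

end OneLine

lemma hasPeakAtHeight_iff {w : List Bool} {h : ℕ} : HasPeakAtHeight w h ↔
    ∃ x y, w = x ++ true :: false :: y ∧ x.count true + 1 = x.count false + h := by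
  constructor
  · rintro ⟨q, hq, hu, hd, hh⟩
    rw [List.getD_eq_getElem _ _ (by lia)] at hu hd
    refine ⟨w.take q, w.drop (q + 2), ?_, ?_⟩
    · rw [← hu, ← hd, List.getElem_cons_drop, List.getElem_cons_drop, List.take_append_drop]
    · rw [List.take_succ_eq_append_getElem (by lia), hu] at hh
      simpa using hh
  · rintro ⟨x, y, rfl, hh⟩
    refine ⟨x.length, by simp, by simp, by simp, ?_⟩
    simpa [List.take_append, List.take_of_length_le] using hh

lemma not_hasPeakAtHeight_nil (h : ℕ) : ¬ HasPeakAtHeight [] h := by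
  simp [hasPeakAtHeight_iff]

lemma IsDyckPath.count_false_le_of_prefix {n : ℕ} {w x : List Bool} (hw : IsDyckPath n w)
    (hx : x <+: w) : x.count false ≤ x.count true := by
  rw [List.prefix_iff_eq_take.1 hx]
  exact hw.2.2 _

lemma IsDyckPath.count_false {n : ℕ} {w : List Bool} (hw : IsDyckPath n w) :
    w.count false = n := by
  have := List.count_true_add_count_false w
  have := hw.1
  have := hw.2.1
  lia

lemma hasPeakAtHeight_one_cons_append_cons {n : ℕ} {L R : List Bool} (hL : IsDyckPath n L) :
    HasPeakAtHeight (true :: (L ++ false :: R)) 1 ↔ L = [] ∨ HasPeakAtHeight R 1 := by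
  have hLcount : L.count true = L.count false := by rw [hL.count_false, hL.2.1]
  simp only [hasPeakAtHeight_iff]
  constructor
  · rintro ⟨_ | ⟨c, x⟩, y, hw, hx⟩
    · rcases L with _ | ⟨c, L⟩
      · exact .inl rfl
      · obtain rfl : c = false := (List.cons.inj (List.cons.inj hw).2).1
        exact absurd (hL.count_false_le_of_prefix (List.prefix_append [false] L)) (by decide)
    · simp only [List.cons_append, List.cons.injEq] at hw
      obtain ⟨rfl, hw⟩ := hw
      rw [List.count_cons_self, List.count_cons_of_ne (by decide)] at hx
      rcases List.append_eq_append_iff.1 hw with ⟨_ | ⟨d, x'⟩, rfl, hR⟩ | ⟨z, hLz, -⟩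
      · simp at hR
      · obtain ⟨rfl, rfl⟩ := List.cons.inj hR
        refine .inr ⟨x', y, rfl, ?_⟩
        rw [List.count_append, List.count_append, List.count_cons_self,
          List.count_cons_of_ne (by decide)] at hx
        lia
      · -- A peak starting inside `L` is at height at least 2.
        have := hL.count_false_le_of_prefix (hLz ▸ List.prefix_append x z)
        lia
  · rintro (rfl | ⟨x, y, rfl, hx⟩)
    · exact ⟨[], R, rfl, rfl⟩
    · refine ⟨true :: (L ++ false :: x), y, by simp, ?_⟩
      rw [List.count_cons_self, List.count_cons_of_ne (by decide), List.count_append,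
        List.count_append, List.count_cons_self, List.count_cons_of_ne (by decide)]
      lia

/-- The encoding of up-steps by `true` and down-steps by `false`. -/
def dyckStepEquivBool : DyckStep ≃ Bool where
  toFun s := s = .U
  invFun b := bif b then .U else .D
  left_inv s := by cases s <;> rfl
  right_inv b := by cases b <;> rfl

lemma isDyckPath_map_toList (p : DyckWord) :
    IsDyckPath p.semilength (p.toList.map dyckStepEquivBool) := by
  have hcount (l : List DyckStep) (s : DyckStep) :=
    List.count_map_of_injective l _ dyckStepEquivBool.injective s
  refine ⟨by simp [p.two_mul_semilength_eq_length], hcount p.toList .U, fun i => ?_⟩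
  rw [← List.map_take]
  exact (hcount _ .D).trans_le ((p.count_D_le_count_U i).trans_eq (hcount _ .U).symm)

lemma IsDyckPath.exists_dyckWord {n : ℕ} {w : List Bool} (hw : IsDyckPath n w) :
    ∃ p : DyckWord, p.toList.map dyckStepEquivBool = w := by
  have hcount (l : List Bool) (b : Bool) :=
    List.count_map_of_injective l _ dyckStepEquivBool.symm.injective b
  refine ⟨⟨w.map dyckStepEquivBool.symm, ?_, fun i => ?_⟩, by simp⟩
  · exact (hcount w true).trans ((hw.2.1.trans hw.count_false.symm).trans (hcount w false).symm)
  · rw [← List.map_take]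
    exact (hcount _ false).trans_le ((hw.2.2 i).trans_eq (hcount _ true).symm)

/-- The Dyck path of a binary tree, read off by the first return to the axis. -/
def treePath {α : Type*} : BinaryTree α → List Bool
  | .nil => []
  | .node _ l r => true :: (treePath l ++ false :: treePath r)

lemma treePath_eq_nil {α : Type*} {t : BinaryTree α} : treePath t = [] ↔ t = .nil := by
  cases t <;> simp [treePath]

lemma treePath_eq_map_ofTree (t : BinaryTree Unit) :
    treePath t = (DyckWord.ofTree t).toList.map dyckStepEquivBool := by
  induction t with
  | nil => rfl
  | node u l r ihl ihr =>
    have hnode : (DyckWord.ofTree (.node u l r)).toList =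
      .U :: ((DyckWord.ofTree l).toList ++ .D :: (DyckWord.ofTree r).toList) := by
      change ([.U] ++ (DyckWord.ofTree l).toList ++ [.D]) ++ (DyckWord.ofTree r).toList = _
      simp
    rw [hnode, treePath, ihl, ihr, List.map_cons, List.map_append, List.map_cons]
    rfl

lemma isDyckPath_treePath (t : BinaryTree Unit) : IsDyckPath t.numNodes (treePath t) := by
  rw [treePath_eq_map_ofTree]
  convert isDyckPath_map_toList _
  rw [← DyckWord.numNodes_toTree, DyckWord.toTree_ofTree]

lemma not_hasPeakAtHeight_one_treePath {t : BinaryTree Unit} :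
    ¬ HasPeakAtHeight (treePath t) 1 ↔ IsFineTree t := by
  induction t with
  | nil => exact iff_of_true (not_hasPeakAtHeight_nil 1) trivial
  | node u l r _ ihr =>
    rw [treePath, hasPeakAtHeight_one_cons_append_cons (isDyckPath_treePath l), treePath_eq_nil,
      not_or, ihr, IsFineTree]

lemma bijOn_treePath (n : ℕ) :
    Set.BijOn treePath {t : BinaryTree Unit | t.numNodes = n} {w | IsDyckPath n w} := by
  refine ⟨?_, Function.Injective.injOn fun t t' h => ?_, fun w hw => ?_⟩
  · rintro t rfl
    exact isDyckPath_treePath t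
  · rw [treePath_eq_map_ofTree, treePath_eq_map_ofTree] at h
    have := DyckWord.ext (List.map_injective_iff.2 dyckStepEquivBool.injective h)
    rw [← DyckWord.toTree_ofTree t, this, DyckWord.toTree_ofTree]
  · obtain ⟨p, rfl⟩ := IsDyckPath.exists_dyckWord hw
    have hp : treePath p.toTree = p.toList.map dyckStepEquivBool := by
      rw [treePath_eq_map_ofTree, DyckWord.ofTree_toTree]
    refine ⟨p.toTree, ?_, hp⟩
    have := isDyckPath_treePath p.toTree
    rw [hp] at this
    exact this.2.1.symm.trans hw.2.1

lemma ncard_sep_eq_of_bijOn {α β : Type*} {f : α → β} {s : Set α} {t : Set β} {p : α → Prop}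
    {q : β → Prop} (hf : Set.BijOn f s t) (hpq : ∀ a, q (f a) ↔ p a) :
    {a ∈ s | p a}.ncard = {b ∈ t | q b}.ncard :=
  (hf.inter_mapsTo (fun a ha => (hpq a).2 ha) fun a ha => (hpq a).1 ha.2).ncard_eq

lemma ncard_isFineTree (n : ℕ) :
    {t : BinaryTree Unit | t.numNodes = n ∧ IsFineTree t}.ncard = #(fineTrees n) := by
  rw [← Set.ncard_coe_finset]
  congr 1
  ext t
  exact mem_fineTrees.symm

lemma card_avoids132_avoidsHat12 (n : ℕ) :
    Nat.card {π : Equiv.Perm (Fin n) | Avoids132 π ∧ AvoidsHat (1 : Equiv.Perm (Fin 2)) 0 π} =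
      #(fineTrees n) := by
  have hword := ncard_sep_eq_of_bijOn (bijOn_oneLine n) fun π => wordAvoidsHat12_oneLine
  have htree := ncard_sep_eq_of_bijOn (bijOn_treeWord 0 n) fun t => wordAvoidsHat12_treeWord
  rw [List.range_eq_range', ← htree] at hword
  exact hword.trans (ncard_isFineTree n)

lemma card_isDyckPath_not_hasPeakAtHeight_one (n : ℕ) :
    Nat.card {w : List Bool | IsDyckPath n w ∧ ¬ HasPeakAtHeight w 1} = #(fineTrees n) :=
  (ncard_sep_eq_of_bijOn (bijOn_treePath n) fun _ =>
    not_hasPeakAtHeight_one_treePath).symm.trans (ncard_isFineTree n)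

/-- Corollary `Fin`. For every `n ≥ 1`, `|S_n(132, 1̂2)|` equals the `n`-th
Fine number `F_n` (where `F_0 = 1`, `F_1 = 0` and `C_m = 2·F_m + F_{m−1}` for `m ≥ 1`, `C_m`
being the `m`-th Catalan number); equivalently, it equals the number of Dyck `n`-paths with no
peak at height `1`. -/
theorem stmt8 (n : ℕ) (hn : 1 ≤ n) (F : ℕ → ℕ) (hF0 : F 0 = 1) (hF1 : F 1 = 0)
    (hFrec : ∀ m : ℕ, 1 ≤ m → catalan m = 2 * F m + F (m - 1)) :
    Nat.card {π : Equiv.Perm (Fin n) |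
        Avoids132 π ∧ AvoidsHat (1 : Equiv.Perm (Fin 2)) 0 π} = F n ∧
    Nat.card {π : Equiv.Perm (Fin n) |
        Avoids132 π ∧ AvoidsHat (1 : Equiv.Perm (Fin 2)) 0 π}
      = Nat.card {w : List Bool | IsDyckPath n w ∧ ¬ HasPeakAtHeight w 1} := by
  rw [card_avoids132_avoidsHat12, card_isDyckPath_not_hasPeakAtHeight_one]
  exact ⟨card_fineTrees_eq_of_catalan_eq hF0 hFrec n, rfl⟩
end

section
/- For every integer n ≥ 1, the number of permutations of length n avoiding 132 and avoiding the hatted pattern 21̂3 equals the (n−1)-th Motzkin number M_{n−1}. -/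
/-- The Motzkin numbers: `M_0 = 1` and `M_{m+1} = M_m + Σ_{k=0}^{m−1} M_k · M_{m−1−k}`. -/
def motzkin : ℕ → ℕ
  | 0 => 1
  | m + 1 => motzkin m + ∑ i : Fin m, motzkin i * motzkin (m - 1 - i)

/-!
A permutation that avoids `132` is uniquely of the form `(σ ⊕ 1) ⊖ τ`: the entries before the
maximum exceed those after it. Such a permutation avoids `21̂3` iff `σ` and `τ` do and, moreover,
every entry of `σ` takes part in an inversion of `σ`, since that is what the pair formed by this
entry and the maximum needs in order to extend to an occurrence of `213`. Finally, every entry of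
`(σ ⊕ 1) ⊖ τ` takes part in an inversion iff `τ` is nonempty. Hence, if `a n` counts the
permutations of length `n` avoiding both patterns and `c n` counts those of them whose inversions
cover all entries, then `a (n + 1) = ∑ c i * a (n - i)` and `a (n + 1) = c (n + 1) + c n`.
Substituting the second identity into the first turns it into
`a (n + 2) = ∑ a (i + 1) * a (n - i)`, which is the Motzkin recurrence.
-/

namespace HatPattern

open List
open Finset.HasAntidiagonal (antidiagonal mem_antidiagonal)

section Lists

variable {α β : Type*} {f : α → β} {l u t : List α} {a x y z : α}

lemma map_sublist_map_iff (hf : Function.Injective f) : l.map f <+ t.map f ↔ l <+ t := by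
  refine ⟨fun h => ?_, fun h => h.map f⟩
  obtain ⟨k, hk, hkl⟩ := sublist_map_iff.1 h
  rwa [map_injective_iff.2 hf hkl]

lemma perm_map_iff {w : List β} : w ~ l.map f ↔ ∃ s, w = s.map f ∧ s ~ l :=
  iff_of_eq (congrFun₂ (eq_map_comp_perm f) w l).symm

lemma pair_sublist_map_iff (hf : Function.Injective f) :
    [f x, f y] <+ l.map f ↔ [x, y] <+ l :=
  map_sublist_map_iff hf (l := [x, y])

lemma triple_sublist_map_iff (hf : Function.Injective f) :
    [f x, f y, f z] <+ l.map f ↔ [x, y, z] <+ l :=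
  map_sublist_map_iff hf (l := [x, y, z])

lemma sublist_left_of_concat_sublist_append (h : l ++ [a] <+ u ++ t) (ha : a ∉ t) :
    l ++ [a] <+ u := by
  obtain ⟨l₁, l₂, hl, h₁, h₂⟩ := sublist_append_iff.1 h
  rcases eq_nil_or_concat' l₂ with rfl | ⟨l₃, b, rfl⟩
  · simpa [hl] using h₁
  · have hab : a = b := by simpa using (append_inj' (hl.trans (append_assoc ..).symm) rfl).2
    exact absurd (h₂.subset (by simp [hab])) ha

lemma sublist_right_of_cons_sublist_append (h : a :: l <+ u ++ t) (ha : a ∉ u) :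
    a :: l <+ t := by
  obtain ⟨l₁, l₂, hl, h₁, h₂⟩ := sublist_append_iff.1 h
  cases l₁ with
  | nil => simpa [hl] using h₂
  | cons b l₃ => exact absurd (h₁.subset (by simp [(cons_eq_cons.1 hl).1])) ha

lemma sublist_finRange_iff {n : ℕ} {l : List (Fin n)} : l <+ finRange n ↔ l.SortedLT := by
  refine ⟨fun h => ((sortedLT_finRange n).pairwise.sublist h).sortedLT, fun h => ?_⟩
  exact sublist_of_subperm_of_sortedLE (h.nodup.subperm fun i _ => mem_finRange i) h.sortedLE
    (sortedLT_finRange n).sortedLE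

end Lists

/-- The word `l` avoids the pattern `132`. -/
def WordAvoids132 {α : Type*} [LT α] (l : List α) : Prop :=
  l.Triplewise fun a b c => ¬ (a < c ∧ c < b)

/-- The entries `x` and `y` of the word `l` play the roles of `2` and `3` in some occurrence of
`213`. Entries are named by their values, so the words in question should have no repetitions. -/
def CompletesTo213 {α : Type*} [LT α] (l : List α) (x y : α) : Prop :=
  ∃ z ∈ l, z < x ∧ [x, z, y] <+ l ∨ x < z ∧ z < y ∧ [z, x, y] <+ l

/-- The word `l` avoids the hatted pattern `21̂3`. -/
def WordAvoidsHat213 {α : Type*} [LT α] (l : List α) : Prop :=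
  ∀ x ∈ l, ∀ y ∈ l, [x, y] <+ l → x < y → CompletesTo213 l x y

/-- The entry `x` of the word `l` takes part in an inversion. As in `CompletesTo213`, entries are
named by their values. -/
def InInversion {α : Type*} [LT α] (l : List α) (x : α) : Prop :=
  ∃ z ∈ l, z < x ∧ [x, z] <+ l ∨ x < z ∧ [z, x] <+ l

/-- Every entry of the word `l` takes part in an inversion. This is what the prefix of a word
avoiding `21̂3` in front of its maximum has to satisfy. -/
def InversionsCover {α : Type*} [LT α] (l : List α) : Prop :=
  ∀ x ∈ l, InInversion l x

section Map

variable {α β : Type*} [LinearOrder α] [Preorder β] {f : α → β} {l : List α}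

lemma wordAvoids132_map (hf : StrictMono f) : WordAvoids132 (l.map f) ↔ WordAvoids132 l := by
  simp only [WordAvoids132, triplewise_map, hf.lt_iff_lt]

lemma wordAvoidsHat213_map (hf : StrictMono f) :
    WordAvoidsHat213 (l.map f) ↔ WordAvoidsHat213 l := by
  simp only [WordAvoidsHat213, CompletesTo213, mem_map, forall_exists_index, and_imp,
    forall_apply_eq_imp_iff₂, exists_exists_and_eq_and, pair_sublist_map_iff hf.injective,
    triple_sublist_map_iff hf.injective, hf.lt_iff_lt]

lemma inversionsCover_map (hf : StrictMono f) :
    InversionsCover (l.map f) ↔ InversionsCover l := by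
  simp only [InversionsCover, InInversion, mem_map, forall_exists_index, and_imp,
    forall_apply_eq_imp_iff₂, exists_exists_and_eq_and, pair_sublist_map_iff hf.injective,
    hf.lt_iff_lt]

end Map

section Append

variable {α : Type*} [Preorder α] {s t u : List α} {m x y : α}

lemma wordAvoids132_append (h : ∀ x ∈ u, ∀ y ∈ t, y < x) :
    WordAvoids132 (u ++ t) ↔ WordAvoids132 u ∧ WordAvoids132 t := by
  refine ⟨fun H => ⟨(triplewise_append.1 H).1, (triplewise_append.1 H).2.1⟩, fun ⟨hu, ht⟩ => ?_⟩
  refine triplewise_append.2 ⟨hu, ht, fun a ha => ?_, fun c hc => ?_⟩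
  · exact pairwise_of_forall_mem_list fun b _ c hc hac => (h a ha c hc).asymm hac.1
  · exact pairwise_of_forall_mem_list fun a ha b _ hac => (h a ha c hc).asymm hac.1

lemma wordAvoids132_concat (h : ∀ x ∈ s, x < m) :
    WordAvoids132 (s ++ [m]) ↔ WordAvoids132 s := by
  refine ⟨fun H => (triplewise_append.1 H).1, fun hs => ?_⟩
  refine triplewise_append.2 ⟨hs, triplewise_singleton .., by simp, fun c hc => ?_⟩
  obtain rfl := mem_singleton.1 hc
  exact pairwise_of_forall_mem_list fun a _ b hb hab => (h b hb).asymm hab.2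

lemma WordAvoids132.not_lt_of_max (H : WordAvoids132 (s ++ m :: t)) (ht : ∀ y ∈ t, y < m) :
    ∀ x ∈ s, ∀ y ∈ t, ¬ x < y := fun x hx y hy hxy =>
  (pairwise_cons.1 ((triplewise_append.1 H).2.2.1 x hx)).1 y hy ⟨hxy, ht y hy⟩

lemma CompletesTo213.mono (H : CompletesTo213 s x y) (h : s <+ t) : CompletesTo213 t x y := by
  obtain ⟨z, hzs, ⟨hzx, hz⟩ | ⟨hxz, hzy, hz⟩⟩ := H
  · exact ⟨z, h.subset hzs, .inl ⟨hzx, hz.trans h⟩⟩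
  · exact ⟨z, h.subset hzs, .inr ⟨hxz, hzy, hz.trans h⟩⟩

lemma CompletesTo213.of_append_left (H : CompletesTo213 (u ++ t) x y) (hy : y ∉ t) :
    CompletesTo213 u x y := by
  obtain ⟨z, -, ⟨hzx, hz⟩ | ⟨hxz, hzy, hz⟩⟩ := H
  · have hz := sublist_left_of_concat_sublist_append (l := [x, z]) hz hy
    exact ⟨z, hz.subset (by simp), .inl ⟨hzx, hz⟩⟩
  · have hz := sublist_left_of_concat_sublist_append (l := [z, x]) hz hy
    exact ⟨z, hz.subset (by simp), .inr ⟨hxz, hzy, hz⟩⟩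

lemma CompletesTo213.of_append_right (H : CompletesTo213 (u ++ t) x y) (hx : x ∉ u)
    (hy : ∀ z ∈ u, ¬ z < y) : CompletesTo213 t x y := by
  obtain ⟨z, -, ⟨hzx, hz⟩ | ⟨hxz, hzy, hz⟩⟩ := H
  · have hz := sublist_right_of_cons_sublist_append hz hx
    exact ⟨z, hz.subset (by simp), .inl ⟨hzx, hz⟩⟩
  · have hz := sublist_right_of_cons_sublist_append hz fun hzu => hy z hzu hzy
    exact ⟨z, hz.subset (by simp), .inr ⟨hxz, hzy, hz⟩⟩

lemma completesTo213_concat (hs : ∀ z ∈ s, z < m) :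
    CompletesTo213 (s ++ [m]) x m ↔ InInversion s x := by
  have cancel {l : List α} : l ++ [m] <+ s ++ [m] ↔ l <+ s := append_sublist_append_right [m]
  constructor
  · rintro ⟨z, -, ⟨hzx, hz⟩ | ⟨hxz, -, hz⟩⟩
    · have hz := (cancel (l := [x, z])).1 hz
      exact ⟨z, hz.subset (by simp), .inl ⟨hzx, hz⟩⟩
    · have hz := (cancel (l := [z, x])).1 hz
      exact ⟨z, hz.subset (by simp), .inr ⟨hxz, hz⟩⟩
  · rintro ⟨z, hzs, ⟨hzx, hz⟩ | ⟨hxz, hz⟩⟩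
    · exact ⟨z, by simp [hzs], .inl ⟨hzx, (cancel (l := [x, z])).2 hz⟩⟩
    · exact ⟨z, by simp [hzs], .inr ⟨hxz, hs z hzs, (cancel (l := [z, x])).2 hz⟩⟩

lemma WordAvoidsHat213.of_append_left (H : WordAvoidsHat213 (u ++ t)) (h : u.Disjoint t) :
    WordAvoidsHat213 u := fun x hx y hy hxy hlt =>
  (H x (mem_append_left t hx) y (mem_append_left t hy) (hxy.trans (sublist_append_left u t))
    hlt).of_append_left (h hy)

lemma wordAvoidsHat213_append (h : ∀ x ∈ u, ∀ y ∈ t, y < x) :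
    WordAvoidsHat213 (u ++ t) ↔ WordAvoidsHat213 u ∧ WordAvoidsHat213 t := by
  have hdisj : u.Disjoint t := fun x hxu hxt => (h x hxu x hxt).false
  have not_lt {y z} (hy : y ∈ t) (hz : z ∈ u) : ¬ z < y := (h z hz y hy).asymm
  constructor
  · refine fun H => ⟨H.of_append_left hdisj, fun x hx y hy hxy hlt => ?_⟩
    exact (H x (mem_append_right u hx) y (mem_append_right u hy)
      (hxy.trans (sublist_append_right u t)) hlt).of_append_right (fun hxu => hdisj hxu hx)
      fun z => not_lt hy
  · rintro ⟨Hu, Ht⟩ x - y hy hxy hlt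
    rcases mem_append.1 hy with hyu | hyt
    · have hxy := sublist_left_of_concat_sublist_append (l := [x]) hxy (hdisj hyu)
      exact (Hu x (hxy.subset (by simp)) y hyu hxy hlt).mono (sublist_append_left u t)
    · have hxy := sublist_right_of_cons_sublist_append hxy fun hxu => not_lt hyt hxu hlt
      exact (Ht x (hxy.subset (by simp)) y hyt hxy hlt).mono (sublist_append_right u t)

lemma wordAvoidsHat213_concat (h : ∀ x ∈ s, x < m) :
    WordAvoidsHat213 (s ++ [m]) ↔ WordAvoidsHat213 s ∧ InversionsCover s := by
  have hdisj : s.Disjoint [m] := fun x hx hxm => (h x hx).ne (mem_singleton.1 hxm)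
  constructor
  · refine fun H => ⟨H.of_append_left hdisj, fun x hx => ?_⟩
    exact (completesTo213_concat h).1 <| H x (by simp [hx]) m (by simp)
      ((singleton_sublist.2 hx).append (Sublist.refl [m])) (h x hx)
  · rintro ⟨Hs, Hcover⟩ x hx y hy hxy hlt
    rcases mem_append.1 hy with hys | hym
    · have hxy := sublist_left_of_concat_sublist_append (l := [x]) hxy (hdisj hys)
      exact (Hs x (hxy.subset (by simp)) y hys hxy hlt).mono (sublist_append_left s [m])
    · obtain rfl := mem_singleton.1 hym
      have hxs : x ∈ s := (mem_append.1 hx).resolve_right fun hxy => hlt.ne (mem_singleton.1 hxy)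
      exact (completesTo213_concat h).2 (Hcover x hxs)

lemma inversionsCover_append (hu : u ≠ []) (ht : t ≠ []) (h : ∀ x ∈ u, ∀ y ∈ t, y < x) :
    InversionsCover (u ++ t) := by
  intro x hx
  rcases mem_append.1 hx with hxu | hxt
  · obtain ⟨y, hy⟩ := exists_mem_of_ne_nil t ht
    exact ⟨y, by simp [hy], .inl ⟨h x hxu y hy,
      (singleton_sublist.2 hxu).append (singleton_sublist.2 hy)⟩⟩
  · obtain ⟨z, hz⟩ := exists_mem_of_ne_nil u hu
    exact ⟨z, by simp [hz], .inr ⟨h z hz x hxt,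
      (singleton_sublist.2 hz).append (singleton_sublist.2 hxt)⟩⟩

lemma not_inversionsCover_concat (h : ∀ x ∈ s, x < m) : ¬ InversionsCover (s ++ [m]) := by
  intro H
  obtain ⟨z, hz, ⟨hzm, hmz⟩ | ⟨hmz, -⟩⟩ := H m (by simp)
  · have hms := sublist_left_of_concat_sublist_append (l := [m]) hmz (by simpa using hzm.ne)
    exact (h m (hms.subset (by simp))).false
  · rcases mem_append.1 hz with hzs | hz
    · exact (h z hzs).asymm hmz
    · exact hmz.ne' (mem_singleton.1 hz)

end Append

section OfFn

variable {n : ℕ} {α : Type*} {g : Fin n → α}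

lemma pair_sublist_ofFn_iff (hg : Function.Injective g) {i j : Fin n} :
    [g i, g j] <+ ofFn g ↔ i < j := by
  rw [ofFn_eq_map, pair_sublist_map_iff hg, sublist_finRange_iff, sortedLT_iff_pairwise,
    pairwise_pair]

lemma triple_sublist_ofFn_iff (hg : Function.Injective g) {i j k : Fin n} :
    [g i, g j, g k] <+ ofFn g ↔ i < j ∧ j < k := by
  rw [ofFn_eq_map, triple_sublist_map_iff hg, sublist_finRange_iff, sortedLT_iff_isChain]
  simp

lemma wordAvoids132_ofFn [LT α] :
    WordAvoids132 (ofFn g) ↔ ¬ ∃ a b c, a < b ∧ b < c ∧ g a < g c ∧ g c < g b := by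
  simp only [WordAvoids132, triplewise_iff_getElem, List.getElem_ofFn]
  constructor
  · rintro H ⟨a, b, c, hab, hbc, h⟩
    exact H a b c hab hbc (by simp) h
  · intro H i j k hij hjk hk h
    exact H ⟨_, _, _, hij, hjk, h⟩

lemma wordAvoidsHat213_ofFn [LT α] (hg : Function.Injective g) :
    WordAvoidsHat213 (ofFn g) ↔ ∀ i j, i < j → g i < g j →
      ∃ k, g k < g i ∧ i < k ∧ k < j ∨ g i < g k ∧ g k < g j ∧ k < i := by
  simp only [WordAvoidsHat213, CompletesTo213, mem_ofFn, forall_exists_index,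
    forall_apply_eq_imp_iff, exists_exists_eq_and, pair_sublist_ofFn_iff hg,
    triple_sublist_ofFn_iff hg]
  refine forall₄_congr fun i j hij _ => ?_
  simp only [hij, and_true]

end OfFn

section Pattern

variable {n : ℕ} {π : Equiv.Perm (Fin n)}

lemma isOcc_213_iff {h : Fin 3 → Fin n} :
    IsOcc (Equiv.swap 0 1) π h ↔
      h 0 < h 1 ∧ h 1 < h 2 ∧ π (h 1) < π (h 0) ∧ π (h 0) < π (h 2) := by
  have h0 : Equiv.swap (0 : Fin 3) 1 0 = 1 := rfl
  have h1 : Equiv.swap (0 : Fin 3) 1 1 = 0 := rfl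
  have h2 : Equiv.swap (0 : Fin 3) 1 2 = 2 := rfl
  have mono : StrictMono h ↔ h 0 < h 1 ∧ h 1 < h 2 := by
    simp [Fin.strictMono_iff_lt_succ, Fin.forall_fin_two]
  rw [IsOcc, mono, and_assoc]
  refine and_congr_right fun _ => and_congr_right fun _ => ⟨fun H => ?_, fun ⟨h10, h02⟩ => ?_⟩
  · exact ⟨(H 1 0).1 (by decide), (H 0 2).1 (by decide)⟩
  · have hlt12 := h10.trans h02
    intro a b
    fin_cases a <;> fin_cases b <;> simp [h0, h1, h2, h10, h02, hlt12, h10.le, h02.le, hlt12.le]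

lemma avoidsHat_213_iff :
    AvoidsHat (Equiv.swap (0 : Fin 3) 1) 1 π ↔ ∀ i j, i < j → π i < π j →
      ∃ k, π k < π i ∧ i < k ∧ k < j ∨ π i < π k ∧ π k < π j ∧ k < i := by
  constructor
  · intro H i j hij hlt
    have ascents : ∀ a b : Fin 3, a < b → Equiv.swap 0 1 a < Equiv.swap 0 1 b →
        a = 0 ∧ b = 2 ∨ a = 1 ∧ b = 2 := by decide
    have hswap : Equiv.swap (0 : Fin 3) 1 2 = 2 := rfl
    obtain ⟨h, hocc, hrange⟩ := H ![i, j] (by simpa [Fin.strictMono_iff_lt_succ] using hij) <| by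
      intro a b
      fin_cases a <;> fin_cases b <;> simp [hswap, hlt, hlt.le]
    obtain ⟨a, ha : h a = i⟩ := hrange ⟨0, rfl⟩
    obtain ⟨b, hb : h b = j⟩ := hrange ⟨1, rfl⟩
    subst ha hb
    have hab : a < b := hocc.1.lt_iff_lt.1 hij
    obtain ⟨h01, h12, hlt10, hlt02⟩ := isOcc_213_iff.1 hocc
    rcases ascents a b hab ((hocc.2 a b).2 hlt) with ⟨rfl, rfl⟩ | ⟨rfl, rfl⟩
    · exact ⟨h 1, .inl ⟨hlt10, h01, h12⟩⟩
    · exact ⟨h 0, .inr ⟨hlt10, hlt02, h01⟩⟩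
  · intro H g hg hgπ
    have h01 : g 0 < g 1 := hg (by decide)
    have hlt : π (g 0) < π (g 1) := (hgπ 0 1).1 (by decide)
    obtain ⟨k, ⟨hk, hik, hkj⟩ | ⟨hk, hkj, hki⟩⟩ := H _ _ h01 hlt
    · refine ⟨![g 0, k, g 1], isOcc_213_iff.2 ⟨hik, hkj, hk, hlt⟩, ?_⟩
      rintro _ ⟨a, rfl⟩
      fin_cases a <;> simp
    · refine ⟨![k, g 0, g 1], isOcc_213_iff.2 ⟨hki, h01, hk, hkj⟩, ?_⟩
      rintro _ ⟨a, rfl⟩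
      fin_cases a <;> simp

end Pattern

section OneLine

/-- The one-line notation of a permutation, as a word in the letters `0, …, n - 1`. -/
def oneLine {n : ℕ} (π : Equiv.Perm (Fin n)) : List ℕ :=
  ofFn fun i => (π i : ℕ)

variable {n : ℕ} {π : Equiv.Perm (Fin n)} {l : List ℕ}

lemma oneLine_injective : Function.Injective (oneLine (n := n)) := fun _ _ h =>
  Equiv.ext fun i => Fin.ext (congrFun (ofFn_injective h) i)

lemma exists_oneLine_eq_iff : (∃ π : Equiv.Perm (Fin n), oneLine π = l) ↔ l ~ range n := by
  rw [← map_coe_finRange_eq_range, perm_map_iff]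
  constructor
  · rintro ⟨π, rfl⟩
    refine ⟨ofFn π, by rw [oneLine, map_ofFn]; rfl, ?_⟩
    exact ofFn_id n ▸ π.ofFn_comp_perm id
  · rintro ⟨s, rfl, hs⟩
    have hlen : s.length = n := by simpa using hs.length_eq
    let e := (hs.nodup_iff.2 (nodup_finRange n)).getEquivOfForallMemList s fun i =>
      hs.mem_iff.2 (mem_finRange i)
    refine ⟨(finCongr hlen.symm).trans e, ext_getElem (by simp [oneLine, hlen]) fun i _ _ => ?_⟩
    simp [oneLine, e]

lemma avoids132_iff_oneLine : Avoids132 π ↔ WordAvoids132 (oneLine π) :=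
  (wordAvoids132_ofFn (g := fun i => (π i : ℕ))).symm

lemma avoidsHat_213_iff_oneLine :
    AvoidsHat (Equiv.swap (0 : Fin 3) 1) 1 π ↔ WordAvoidsHat213 (oneLine π) :=
  avoidsHat_213_iff.trans (wordAvoidsHat213_ofFn (Fin.val_injective.comp π.injective)).symm

end OneLine

section MaxJoin

/-- The one-line notation of `(σ ⊕ 1) ⊖ τ`, where `s` and `t` are those of `σ` and `τ`: the
shifted word `s`, then a new maximum, then `t`. -/
def maxJoin (s t : List ℕ) : List ℕ :=
  s.map (t.length + ·) ++ (t.length + s.length) :: t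

variable {s t s' t' u l : List ℕ} {i j n : ℕ}

lemma maxJoin_eq : maxJoin s t = (s.map (t.length + ·) ++ [t.length + s.length]) ++ t := by
  simp [maxJoin]

lemma lt_length_of_perm_range (h : l ~ range n) : ∀ x ∈ l, x < l.length := fun x hx => by
  simpa [h.length_eq] using h.subset hx

lemma maxJoin_perm_range (hs : s ~ range i) (ht : t ~ range j) :
    maxJoin s t ~ range (i + j + 1) := by
  have hi : s.length = i := by simpa using hs.length_eq
  have hj : t.length = j := by simpa using ht.length_eq
  rw [range_succ, add_comm i j, range_add, maxJoin, hi, hj]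
  calc s.map (j + ·) ++ (j + i) :: t
    _ ~ (j + i) :: (t ++ s.map (j + ·)) := perm_middle.trans (perm_append_comm.cons _)
    _ ~ (j + i) :: (range j ++ (range i).map (j + ·)) := (ht.append (hs.map _)).cons _
    _ ~ range j ++ (range i).map (j + ·) ++ [j + i] := (perm_append_singleton ..).symm

lemma forall_map_length_add_lt (hs : ∀ x ∈ s, x < s.length) :
    ∀ x ∈ s.map (t.length + ·), x < t.length + s.length :=
  forall_mem_map.2 fun x hx => Nat.add_lt_add_left (hs x hx) _

lemma forall_concat_forall_lt (ht : ∀ x ∈ t, x < t.length) :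
    ∀ x ∈ s.map (t.length + ·) ++ [t.length + s.length], ∀ y ∈ t, y < x := by
  intro x hx y hy
  have : t.length ≤ x := by grind
  exact (ht y hy).trans_le this

lemma wordAvoids132_maxJoin (hs : ∀ x ∈ s, x < s.length) (ht : ∀ x ∈ t, x < t.length) :
    WordAvoids132 (maxJoin s t) ↔ WordAvoids132 s ∧ WordAvoids132 t := by
  rw [maxJoin_eq, wordAvoids132_append (forall_concat_forall_lt ht),
    wordAvoids132_concat (forall_map_length_add_lt hs), wordAvoids132_map add_right_strictMono]

lemma wordAvoidsHat213_maxJoin (hs : ∀ x ∈ s, x < s.length) (ht : ∀ x ∈ t, x < t.length) :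
    WordAvoidsHat213 (maxJoin s t) ↔
      (WordAvoidsHat213 s ∧ InversionsCover s) ∧ WordAvoidsHat213 t := by
  rw [maxJoin_eq, wordAvoidsHat213_append (forall_concat_forall_lt ht),
    wordAvoidsHat213_concat (forall_map_length_add_lt hs),
    wordAvoidsHat213_map add_right_strictMono, inversionsCover_map add_right_strictMono]

lemma inversionsCover_maxJoin (hs : ∀ x ∈ s, x < s.length) (ht : ∀ x ∈ t, x < t.length) :
    InversionsCover (maxJoin s t) ↔ t ≠ [] := by
  rw [maxJoin_eq]
  refine ⟨?_, fun hne => inversionsCover_append (by simp) hne (forall_concat_forall_lt ht)⟩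
  rintro H rfl
  rw [append_nil] at H
  exact not_inversionsCover_concat (forall_map_length_add_lt hs) H

lemma maxJoin_inj (hs : ∀ x ∈ s, x < s.length) (ht : ∀ x ∈ t, x < t.length) :
    maxJoin s t = maxJoin s' t' ↔ s = s' ∧ t = t' := by
  refine ⟨fun h => ?_, by rintro ⟨rfl, rfl⟩; rfl⟩
  have htop : t'.length + s'.length = t.length + s.length := by
    have := congrArg length h
    simp only [maxJoin, length_append, length_map, length_cons] at this
    omega
  rw [maxJoin, maxJoin, append_cons_inj_of_notMem] at h
  · obtain ⟨hmap, -, rfl⟩ := h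
    exact ⟨map_injective_iff.2 (add_right_injective t.length) hmap, rfl⟩
  · exact fun hmem => (forall_map_length_add_lt hs _ hmem).ne htop
  · exact fun hmem => (ht _ hmem).not_ge (by omega)

lemma perm_range_of_append_perm_range (h : u ++ t ~ range n) (hlt : ∀ x ∈ u, ∀ y ∈ t, y < x) :
    t ~ range t.length ∧ ∃ s, u = s.map (t.length + ·) ∧ s ~ range u.length := by
  have hn : n = t.length + u.length := by simpa [add_comm] using h.length_eq.symm
  have ht := mergeSort_perm t (· ≤ ·)
  have hu := mergeSort_perm u (· ≤ ·)
  have hsorted : (t.mergeSort (· ≤ ·) ++ u.mergeSort (· ≤ ·)).SortedLE := by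
    have hle := fun y hy x hx => (hlt x (hu.subset hx) y (ht.subset hy)).le
    exact sortedLE_iff_pairwise.2 <| pairwise_append.2
      ⟨sortedLE_mergeSort.pairwise, sortedLE_mergeSort.pairwise, hle⟩
  have heq : t.mergeSort (· ≤ ·) ++ u.mergeSort (· ≤ ·) = range n :=
    (((ht.append hu).trans perm_append_comm).trans h).eq_of_sortedLE hsorted
      (sortedLT_range n).sortedLE
  rw [hn, range_add] at heq
  obtain ⟨heqt, hequ⟩ := append_inj heq (by simp)
  exact ⟨heqt ▸ ht.symm, perm_map_iff.1 (hequ ▸ hu.symm)⟩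

lemma exists_maxJoin_eq (hl : l ~ range (n + 1)) (H : WordAvoids132 l) :
    ∃ s t, s ~ range s.length ∧ t ~ range t.length ∧ maxJoin s t = l := by
  obtain ⟨u, t, rfl⟩ := append_of_mem (hl.mem_iff.2 self_mem_range_succ)
  have hut : u ++ t ~ range n := by
    refine (perm_cons n).1 (perm_middle.symm.trans (hl.trans ?_))
    exact range_succ ▸ perm_append_singleton n (range n)
  have ht : ∀ y ∈ t, y < n := fun y hy => mem_range.1 (hut.subset (mem_append_right u hy))
  have hdisj : u.Disjoint t := (nodup_append'.1 (hut.nodup_iff.2 nodup_range)).2.2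
  have hlt : ∀ x ∈ u, ∀ y ∈ t, y < x := fun x hx y hy =>
    (not_lt.1 (H.not_lt_of_max ht x hx y hy)).lt_of_ne fun hyx => hdisj hx (hyx ▸ hy)
  obtain ⟨ht, s, rfl, hs⟩ := perm_range_of_append_perm_range hut hlt
  have hn : t.length + s.length = n := by simpa [add_comm] using hut.length_eq
  exact ⟨s, t, by simpa using hs, ht, by rw [maxJoin, hn]⟩

end MaxJoin

section Count

open Classical in
/-- The one-line notations of the permutations of length `n` that avoid `132` and `21̂3`. -/
noncomputable def goodWords (n : ℕ) : Finset (List ℕ) :=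
  (range n).permutations.toFinset.filter fun l => WordAvoids132 l ∧ WordAvoidsHat213 l

open Classical in
/-- The words of `goodWords n` in which every entry takes part in an inversion: exactly the `σ`
that can stand in front of the maximum in the decomposition `(σ ⊕ 1) ⊖ τ`. -/
noncomputable def coveredGoodWords (n : ℕ) : Finset (List ℕ) :=
  (goodWords n).filter InversionsCover

variable {n i j : ℕ} {s t l : List ℕ}

lemma mem_goodWords :
    l ∈ goodWords n ↔ l ~ range n ∧ WordAvoids132 l ∧ WordAvoidsHat213 l := by
  simp [goodWords]

lemma mem_coveredGoodWords : l ∈ coveredGoodWords n ↔ l ∈ goodWords n ∧ InversionsCover l := by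
  simp [coveredGoodWords]

lemma length_of_mem_goodWords (h : l ∈ goodWords n) : l.length = n := by
  simpa using (mem_goodWords.1 h).1.length_eq

lemma lt_length_of_mem_goodWords (h : l ∈ goodWords n) : ∀ x ∈ l, x < l.length :=
  lt_length_of_perm_range (mem_goodWords.1 h).1

lemma goodWords_zero : goodWords 0 = {[]} := by
  ext l
  simp only [mem_goodWords, range_zero, perm_nil, Finset.mem_singleton, and_iff_left_iff_imp]
  rintro rfl
  simp [WordAvoids132, WordAvoidsHat213]

lemma coveredGoodWords_zero : coveredGoodWords 0 = {[]} := by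
  ext l
  simp only [mem_coveredGoodWords, goodWords_zero, Finset.mem_singleton, and_iff_left_iff_imp]
  rintro rfl
  simp [InversionsCover]

lemma maxJoin_mem_goodWords (hs : s ~ range i) (ht : t ~ range j) :
    maxJoin s t ∈ goodWords (i + j + 1) ↔ s ∈ coveredGoodWords i ∧ t ∈ goodWords j := by
  have hs' := lt_length_of_perm_range hs
  have ht' := lt_length_of_perm_range ht
  simp only [mem_coveredGoodWords, mem_goodWords, maxJoin_perm_range hs ht, hs, ht, true_and,
    wordAvoids132_maxJoin hs' ht', wordAvoidsHat213_maxJoin hs' ht']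
  tauto

lemma mem_goodWords_succ : l ∈ goodWords (n + 1) ↔
    ∃ p ∈ antidiagonal n, ∃ s ∈ coveredGoodWords p.1, ∃ t ∈ goodWords p.2,
      maxJoin s t = l := by
  constructor
  · intro hl
    have hlen : l.length = n + 1 := length_of_mem_goodWords hl
    obtain ⟨s, t, hs, ht, rfl⟩ := exists_maxJoin_eq (mem_goodWords.1 hl).1 (mem_goodWords.1 hl).2.1
    have hn : s.length + t.length = n := by simpa [maxJoin, ← add_assoc] using hlen
    rw [← hn, maxJoin_mem_goodWords hs ht] at hl
    exact ⟨(s.length, t.length), mem_antidiagonal.2 hn, s, hl.1, t, hl.2, rfl⟩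
  · rintro ⟨⟨i, j⟩, hij, s, hs, t, ht, rfl⟩
    obtain rfl : i + j = n := mem_antidiagonal.1 hij
    have hs_perm := (mem_goodWords.1 (mem_coveredGoodWords.1 hs).1).1
    exact (maxJoin_mem_goodWords hs_perm (mem_goodWords.1 ht).1).2 ⟨hs, ht⟩

lemma card_goodWords_succ (n : ℕ) : (goodWords (n + 1)).card =
    ∑ p ∈ antidiagonal n, (coveredGoodWords p.1).card * (goodWords p.2).card := by
  simp_rw [← Finset.card_product]
  rw [← Finset.card_sigma]
  symm
  refine Finset.card_bij (fun x _ => maxJoin x.2.1 x.2.2) ?_ ?_ ?_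
  · rintro ⟨p, s, t⟩ h
    simp only [Finset.mem_sigma, Finset.mem_product] at h
    exact mem_goodWords_succ.2 ⟨p, h.1, s, h.2.1, t, h.2.2, rfl⟩
  · rintro ⟨⟨i, j⟩, s, t⟩ h ⟨⟨i', j'⟩, s', t'⟩ h' heq
    simp only [Finset.mem_sigma, Finset.mem_product, mem_coveredGoodWords] at h h'
    obtain ⟨rfl, rfl⟩ := (maxJoin_inj (lt_length_of_mem_goodWords h.2.1.1)
      (lt_length_of_mem_goodWords h.2.2)).1 heq
    obtain rfl := (length_of_mem_goodWords h.2.1.1).symm.trans (length_of_mem_goodWords h'.2.1.1)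
    obtain rfl := (length_of_mem_goodWords h.2.2).symm.trans (length_of_mem_goodWords h'.2.2)
    rfl
  · intro l hl
    obtain ⟨p, hp, s, hs, t, ht, rfl⟩ := mem_goodWords_succ.1 hl
    exact ⟨⟨p, s, t⟩, by simp [Finset.mem_sigma, hp, hs, ht], rfl⟩

lemma mem_goodWords_succ_and_not_inversionsCover :
    l ∈ goodWords (n + 1) ∧ ¬ InversionsCover l ↔ ∃ s ∈ coveredGoodWords n, maxJoin s [] = l := by
  constructor
  · rintro ⟨hl, hcover⟩
    obtain ⟨⟨i, j⟩, hij, s, hs, t, ht, rfl⟩ := mem_goodWords_succ.1 hl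
    have hs_lt := lt_length_of_mem_goodWords (mem_coveredGoodWords.1 hs).1
    obtain rfl : t = [] := not_ne_iff.1 fun hne =>
      hcover ((inversionsCover_maxJoin hs_lt (lt_length_of_mem_goodWords ht)).2 hne)
    obtain rfl : 0 = j := length_of_mem_goodWords ht
    obtain rfl : i = n := mem_antidiagonal.1 hij
    exact ⟨s, hs, rfl⟩
  · rintro ⟨s, hs, rfl⟩
    have hs_good := (mem_coveredGoodWords.1 hs).1
    refine ⟨mem_goodWords_succ.2 ⟨(n, 0), by simp, s, hs, [], by simp [goodWords_zero], rfl⟩, ?_⟩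
    simp [inversionsCover_maxJoin (lt_length_of_mem_goodWords hs_good)]

lemma card_goodWords_succ_eq_add (n : ℕ) :
    (goodWords (n + 1)).card = (coveredGoodWords (n + 1)).card + (coveredGoodWords n).card := by
  classical
  have himage : {l ∈ goodWords (n + 1) | ¬ InversionsCover l} =
      (coveredGoodWords n).image (maxJoin · []) := by
    ext l
    rw [Finset.mem_filter, mem_goodWords_succ_and_not_inversionsCover, Finset.mem_image]
  have hinj : Set.InjOn (maxJoin · []) (coveredGoodWords n : Set (List ℕ)) := by
    intro s hs s' _ h
    have hs_lt := lt_length_of_mem_goodWords (mem_coveredGoodWords.1 hs).1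
    exact ((maxJoin_inj hs_lt (by simp)).1 h).1
  rw [← Finset.card_image_of_injOn hinj, ← himage, coveredGoodWords,
    Finset.card_filter_add_card_filter_not]

lemma card_avoiders_eq_card_goodWords (n : ℕ) :
    Nat.card {π : Equiv.Perm (Fin n) |
      Avoids132 π ∧ AvoidsHat (Equiv.swap (0 : Fin 3) 1) 1 π} = (goodWords n).card := by
  rw [Nat.card_coe_set_eq, ← Set.ncard_image_of_injective _ oneLine_injective,
    ← Set.ncard_coe_finset]
  congr 1
  ext l
  simp only [avoids132_iff_oneLine, avoidsHat_213_iff_oneLine, Set.mem_image,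
    Set.mem_ofPred_eq, Finset.mem_coe, mem_goodWords, ← exists_oneLine_eq_iff]
  constructor
  · rintro ⟨π, h, rfl⟩
    exact ⟨⟨π, rfl⟩, h⟩
  · rintro ⟨⟨π, rfl⟩, h⟩
    exact ⟨π, h, rfl⟩

end Count

section Motzkin

lemma motzkin_add_two (m : ℕ) : motzkin (m + 2) =
    motzkin (m + 1) + ∑ p ∈ antidiagonal m, motzkin p.1 * motzkin p.2 := by
  rw [motzkin, Finset.Nat.sum_antidiagonal_eq_sum_range_succ_mk, Finset.sum_range]
  rfl

variable {a c : ℕ → ℕ}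

lemma add_two_eq_sum_antidiagonal (hc : c 0 = 1)
    (hconv : ∀ n, a (n + 1) = ∑ p ∈ antidiagonal n, c p.1 * a p.2)
    (hadd : ∀ n, a (n + 1) = c (n + 1) + c n) (n : ℕ) :
    a (n + 2) = ∑ p ∈ antidiagonal n, a (p.1 + 1) * a p.2 := by
  rw [hconv, Finset.Nat.sum_antidiagonal_succ, hc, one_mul, hconv n, ← Finset.sum_add_distrib]
  simp only [hadd]
  exact Finset.sum_congr rfl fun p _ => by ring

lemma eq_motzkin_of_recurrences (ha : a 0 = 1) (hc : c 0 = 1)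
    (hconv : ∀ n, a (n + 1) = ∑ p ∈ antidiagonal n, c p.1 * a p.2)
    (hadd : ∀ n, a (n + 1) = c (n + 1) + c n) (n : ℕ) : a (n + 1) = motzkin n := by
  have ha_one : a 1 = 1 := by simp [hconv, ha, hc]
  have hrec := add_two_eq_sum_antidiagonal hc hconv hadd
  induction n using Nat.strong_induction_on with
  | _ n ih =>
    match n with
    | 0 => rw [ha_one, motzkin]
    | 1 => simp [hrec, ha_one, ha, motzkin]
    | m + 2 =>
      rw [hrec, Finset.Nat.sum_antidiagonal_succ', ha, mul_one, ih _ (by omega), motzkin_add_two]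
      refine congrArg _ (Finset.sum_congr rfl fun p hp => ?_)
      have hpm := mem_antidiagonal.1 hp
      rw [ih p.1 (by omega), ih p.2 (by omega)]

end Motzkin

end HatPattern

/-- Corollary `Mot`. For every `n ≥ 1`, `|S_n(132, 21̂3)|` — the number of
permutations of length `n` avoiding `132` and the hatted pattern obtained from `213`
(0-indexed one-line notation `(1,0,2)`, i.e. `Equiv.swap 0 1`) by marking the entry `1`
(position `2`, 0-indexed index `1`) — equals the `(n−1)`-th Motzkin number. -/
theorem stmt13 (n : ℕ) (hn : 1 ≤ n) :
    Nat.card {π : Equiv.Perm (Fin n) |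
        Avoids132 π ∧ AvoidsHat (Equiv.swap (0 : Fin 3) 1) 1 π} = motzkin (n - 1) := by
  obtain ⟨m, rfl⟩ := Nat.exists_eq_add_of_le' hn
  rw [HatPattern.card_avoiders_eq_card_goodWords, Nat.add_sub_cancel]
  exact HatPattern.eq_motzkin_of_recurrences
    (a := fun k => (HatPattern.goodWords k).card)
    (c := fun k => (HatPattern.coveredGoodWords k).card)
    (by simp [HatPattern.goodWords_zero]) (by simp [HatPattern.coveredGoodWords_zero])
    HatPattern.card_goodWords_succ HatPattern.card_goodWords_succ_eq_add m
end

section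
/- Let π ∈ S_n. Then π avoids both 132 and the hatted pattern 21̂3 if and only if π avoids 132 and π contains no factor a(a+1), i.e., there is no index i with π_{i+1} = π_i + 1. -/
/-!
An ascent `π_p < π_q` becomes an occurrence of `213` by adjoining one entry exactly when some entry
between the two is smaller than `π_p`, or some entry to the left of `π_p` has its value strictly
between `π_p` and `π_q`. Neither can happen when the two entries are adjacent both in position and
in value. Conversely, let `π_r` be the entry right after `π_p`, and `π_s` the entry with the value
right above `π_p`. If the ascent does not extend, then `π_r > π_p` and `s > p`; so either `r = s`
and `π_p π_r` is a factor `a(a+1)`, or `π_p π_r π_s` is an occurrence of `132`.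
-/

section LinearOrder

variable {α β : Type*} [LinearOrder α] [LinearOrder β]

/-- The ascent of `f` at positions `p < q` extends to an occurrence of the pattern `213`: the
adjoined entry plays the role of the `1` (position `r`) or of the `2` (position `s`). It cannot
play the role of the `3`, since the other two entries would form a descent. -/
def AscentExtendsTo213 (f : α → β) (p q : α) : Prop :=
  (∃ r, p < r ∧ r < q ∧ f r < f p) ∨ ∃ s < p, f p < f s ∧ f s < f q

theorem not_ascentExtendsTo213_of_covBy {f : α → β} {p q : α} (hpq : p ⋖ q) (hf : f p ⋖ f q) :
    ¬ AscentExtendsTo213 f p q := by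
  rintro (⟨r, hpr, hrq, -⟩ | ⟨s, -, hps, hsq⟩)
  · exact hpq.2 hpr hrq
  · exact hf.2 hps hsq

theorem ascentExtendsTo213_of_not_132_of_not_covBy [IsStronglyAtomic α] [IsStronglyAtomic β]
    (f : α ≃ β) (h132 : ¬ ∃ a b c, a < b ∧ b < c ∧ f a < f c ∧ f c < f b)
    (hfac : ¬ ∃ i j, i ⋖ j ∧ f i ⋖ f j) {p q : α} (hpq : p < q) (hf : f p < f q) :
    AscentExtendsTo213 f p q := by
  obtain ⟨r, hpr, hrq⟩ := exists_covBy_le_of_lt hpq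
  obtain ⟨s, hps, hsq⟩ : ∃ s, f p ⋖ f s ∧ f s ≤ f q :=
    f.surjective.exists.1 (exists_covBy_le_of_lt hf)
  by_contra hext
  obtain ⟨hr, hs⟩ := not_or.1 hext
  have hfpr : f p < f r := by
    refine (f.injective.ne hpr.ne).lt_of_le (not_lt.1 fun hfrp ↦ hr ⟨r, hpr.lt, ?_, hfrp⟩)
    exact hrq.lt_of_ne fun hrq ↦ (hfrp.trans hf).ne (congrArg f hrq)
  have hlt_ps : p < s := by
    refine lt_of_le_of_ne (not_lt.1 fun hsp ↦ hs ⟨s, hsp, hps.lt, ?_⟩) fun h ↦ hps.ne (h ▸ rfl)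
    exact hsq.lt_of_ne (f.injective.ne (hsp.trans hpq).ne)
  have hrs : r ≠ s := fun h ↦ hfac ⟨p, r, hpr, h ▸ hps⟩
  exact h132 ⟨p, r, s, hpr.lt, (hpr.ge_of_gt hlt_ps).lt_of_ne hrs, hps.lt,
    (hps.ge_of_gt hfpr).lt_of_ne (f.injective.ne hrs.symm)⟩

theorem forall_ascentExtendsTo213_iff_of_not_132 [IsStronglyAtomic α] [IsStronglyAtomic β]
    (f : α ≃ β) (h132 : ¬ ∃ a b c, a < b ∧ b < c ∧ f a < f c ∧ f c < f b) :
    (∀ p q, p < q → f p < f q → AscentExtendsTo213 f p q) ↔ ¬ ∃ i j, i ⋖ j ∧ f i ⋖ f j :=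
  ⟨fun h ⟨i, j, hij, hf⟩ ↦ not_ascentExtendsTo213_of_covBy hij hf (h i j hij.lt hf.lt),
    fun hfac _ _ ↦ ascentExtendsTo213_of_not_132_of_not_covBy f h132 hfac⟩

end LinearOrder

theorem forall_lt_iff_lt_iff_strictMono {α β γ : Type*} [LinearOrder α] [Preorder β] [Preorder γ]
    {σ : α → β} (hσ : StrictMono σ) {f : α → γ} :
    (∀ a b, σ a < σ b ↔ f a < f b) ↔ StrictMono f :=
  ⟨fun h a b hab ↦ (h a b).1 (hσ hab), fun hf _ _ ↦ hσ.lt_iff_lt.trans hf.lt_iff_lt.symm⟩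

section Pattern

variable {n : ℕ} {π : Equiv.Perm (Fin n)}

theorem isOcc_iff_strictMono {k : ℕ} {τ : Equiv.Perm (Fin k)} {g : Fin k → Fin n} :
    IsOcc τ π g ↔ StrictMono g ∧ StrictMono (π ∘ g ∘ τ.symm) := by
  refine and_congr_right fun _ ↦ ⟨fun h a b hab ↦ (h _ _).1 (by simpa using hab), fun h a b ↦ ?_⟩
  simpa using (h.lt_iff_lt (a := τ a) (b := τ b)).symm

theorem isOcc_213_iff {h : Fin 3 → Fin n} :
    IsOcc (Equiv.swap 0 1) π h ↔
      (h 0 < h 1 ∧ h 1 < h 2) ∧ π (h 1) < π (h 0) ∧ π (h 0) < π (h 2) := by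
  have h2 : Equiv.swap (0 : Fin 3) 1 2 = 2 := by decide
  simp [isOcc_iff_strictMono, Fin.strictMono_iff_lt_succ, Fin.forall_fin_two, h2]

theorem exists_isOcc_213_iff_ascentExtendsTo213 {p q : Fin n} (hpq : p < q) (hπ : π p < π q) :
    (∃ h : Fin 3 → Fin n, IsOcc (Equiv.swap 0 1) π h ∧ {p, q} ⊆ Set.range h) ↔
      AscentExtendsTo213 π p q := by
  simp only [Set.pair_subset_iff, Set.mem_range]
  constructor
  · have ascents_213 : ∀ x y : Fin 3, x < y → Equiv.swap 0 1 x < Equiv.swap 0 1 y →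
        (x = 0 ∨ x = 1) ∧ y = 2 := by decide
    rintro ⟨h, hocc, ⟨x, rfl⟩, ⟨y, rfl⟩⟩
    obtain ⟨⟨h01, h12⟩, hπ10, hπ02⟩ := isOcc_213_iff.1 hocc
    obtain ⟨rfl | rfl, rfl⟩ := ascents_213 x y (hocc.1.lt_iff_lt.1 hpq) ((hocc.2 x y).2 hπ)
    · exact .inl ⟨h 1, h01, h12, hπ10⟩
    · exact .inr ⟨h 0, h01, hπ10, hπ02⟩
  · rintro (⟨r, hpr, hrq, hr⟩ | ⟨s, hsp, hps, hsq⟩)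
    · exact ⟨![p, r, q], isOcc_213_iff.2 ⟨⟨hpr, hrq⟩, hr, hπ⟩, ⟨0, rfl⟩, ⟨2, rfl⟩⟩
    · exact ⟨![s, p, q], isOcc_213_iff.2 ⟨⟨hsp, hpq⟩, hps, hsq⟩, ⟨1, rfl⟩, ⟨2, rfl⟩⟩

theorem avoidsHat_213_iff :
    AvoidsHat (Equiv.swap (0 : Fin 3) 1) 1 π ↔
      ∀ p q, p < q → π p < π q → AscentExtendsTo213 π p q := by
  have hτ : StrictMono fun a : Fin 2 ↦ Equiv.swap (0 : Fin 3) 1 (Fin.succAbove 1 a) := by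
    decide
  have hrange (g : Fin 2 → Fin n) : Set.range g = {g 0, g 1} := by
    simp [Set.ext_iff, Fin.exists_fin_two, eq_comm]
  simp only [AvoidsHat, forall_lt_iff_lt_iff_strictMono hτ, hrange, Fin.strictMono_iff_lt_succ,
    Fin.forall_fin_one]
  rw [(finTwoArrowEquiv (Fin n)).forall_congr_left, Prod.forall]
  exact forall₄_congr fun p q hpq hπ ↦ exists_isOcc_213_iff_ascentExtendsTo213 hpq hπ

end Pattern

theorem exists_covBy_map_covBy_iff {m n : ℕ} {f : Fin n → Fin m} :
    (∃ i j, i ⋖ j ∧ f i ⋖ f j) ↔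
      ∃ (i : ℕ) (h : i + 1 < n), (f ⟨i + 1, h⟩ : ℕ) = (f ⟨i, Nat.lt_of_succ_lt h⟩ : ℕ) + 1 := by
  simp only [Fin.covBy_iff, Nat.covBy_iff_add_one_eq]
  constructor
  · rintro ⟨i, ⟨_, hj⟩, rfl, h⟩
    exact ⟨i, hj, h.symm⟩
  · rintro ⟨i, hi, h⟩
    exact ⟨⟨i, Nat.lt_of_succ_lt hi⟩, ⟨i + 1, hi⟩, rfl, h.symm⟩

/-- Theorem `fac`, §4. A permutation `π ∈ S_n` avoids both `132` and the
hatted pattern `21̂3` (the pattern `213`, 0-indexed one-line notation `(1,0,2)` i.e.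
`Equiv.swap 0 1`, with its entry `1` marked) if and only if `π` avoids `132` and contains no
factor `a(a+1)`, i.e. there is no index `i` with `π_{i+1} = π_i + 1`. -/
theorem stmt15 (n : ℕ) (π : Equiv.Perm (Fin n)) :
    (Avoids132 π ∧ AvoidsHat (Equiv.swap (0 : Fin 3) 1) 1 π) ↔
    (Avoids132 π ∧ ¬ ∃ (i : ℕ) (h : i + 1 < n),
      (π ⟨i + 1, h⟩ : ℕ) = (π ⟨i, by omega⟩ : ℕ) + 1) := by
  refine and_congr_right fun h132 ↦ ?_
  rw [avoidsHat_213_iff, forall_ascentExtendsTo213_iff_of_not_132 π h132,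
    exists_covBy_map_covBy_iff]
end

section
/- Let π ∈ S_n be a permutation each of whose LTRM blocks is increasing (equivalently, π has a geometric representation). Call a pair (π_i, π_{i+1}) an arc of π if π_i and π_{i+1} lie in the same LTRM block (so π_i < π_{i+1}). Then π avoids the pattern 132 if and only if no two arcs of π cross, i.e., there are no two arcs (a, b) and (c, d) with a < c < b < d. -/
/-!
Everything rests on a discrete intermediate value principle: on the way from an index satisfying a
predicate to a later one violating it, the predicate is lost at some covering pair. Given a 132
pattern of the sequence `f` at `a < b < c`, apply this between `a` and `b` to the predicate that the
value is at most `f c` to get an arc straddling `f c` in value, and then between the end of that arc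
and `c` to the predicate that the value lies outside the arc. The entry at which `f` steps into the
arc is not a left-to-right minimum, so it is reached by an increasing step from a value below the
arc, and the two arcs cross. Conversely, of two crossing arcs, the one that comes first forms a 132
pattern together with the entry of the other whose value lies between its two values.
-/

open Function

variable {ι α : Type*}

section Definitions

variable [Preorder ι] [Preorder α]

/-- The pattern 132 occurs in the sequence `f`; for permutations this is the negation of
`Avoids132`. -/
def Contains132 (f : ι → α) : Prop :=
  ∃ a b c, a < b ∧ b < c ∧ f a < f c ∧ f c < f b

/-- The entry of the sequence `f` at `i` is a left-to-right minimum; this is `IsLTRMin` for an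
arbitrary sequence. -/
def IsLeftToRightMin (f : ι → α) (i : ι) : Prop :=
  ∀ j < i, f i < f j

/-- The indices `i` and `j` are consecutive and lie in the same block of the sequence `f`, so that
`(f i, f j)` is an arc. A block begins exactly at a left-to-right minimum, whence the condition
on `j`. -/
def IsArc (f : ι → α) (i j : ι) : Prop :=
  i ⋖ j ∧ ¬ IsLeftToRightMin f j

/-- Two arcs of the sequence `f` cross: drawn as half-circles between their values, they
intersect. -/
def HasCrossingArcs (f : ι → α) : Prop :=
  ∃ i i' j j', IsArc f i i' ∧ IsArc f j j' ∧ f i < f j ∧ f j < f i' ∧ f i' < f j'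

end Definitions

theorem exists_covBy_and_not [PartialOrder ι] [LocallyFiniteOrder ι] {p : ι → Prop} {a b : ι}
    (hab : a ≤ b) (ha : p a) (hb : ¬ p b) : ∃ i j, a ≤ i ∧ i ⋖ j ∧ j ≤ b ∧ p i ∧ ¬ p j := by
  induction le_iff_reflTransGen_covBy.mp hab with
  | refl => exact absurd ha hb
  | @tail c d hac hcd ih =>
    have hac' : a ≤ c := le_iff_reflTransGen_covBy.mpr hac
    by_cases hc : p c
    · exact ⟨c, d, hac', hcd, le_rfl, hc, hb⟩
    · obtain ⟨i, j, hai, hij, hjc, hi, hj⟩ := ih hac' hc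
      exact ⟨i, j, hai, hij, hjc.trans hcd.le, hi, hj⟩

theorem not_isLeftToRightMin_of_lt [Preorder ι] [Preorder α] {f : ι → α} {i j : ι}
    (hij : i < j) (hf : f i < f j) : ¬ IsLeftToRightMin f j :=
  fun hj => hf.asymm (hj i hij)

theorem contains132_of_covBy_of_covBy [LinearOrder ι] [Preorder α] {f : ι → α} {i i' j j' : ι}
    (hi : i ⋖ i') (hj : j ⋖ j') (hij : f i < f j) (hji' : f j < f i') (hij' : f i' < f j') :
    Contains132 f := by
  rcases lt_trichotomy i j with h | rfl | h
  · have hne : i' ≠ j := fun h => hji'.ne' (congrArg f h)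
    exact ⟨i, i', j, hi.lt, (hi.ge_of_gt h).lt_of_ne hne, hij, hji'⟩
  · exact absurd hij (lt_irrefl _)
  · exact ⟨j, j', i', hj.lt, (hj.ge_of_gt h).trans_lt hi.lt, hji', hij'⟩

section LocallyFinite

variable [LinearOrder ι] [LocallyFiniteOrder ι] [LinearOrder α] {f : ι → α}

theorem Contains132.exists_covBy (h : Contains132 f) (hf : Injective f) :
    ∃ i j c, i ⋖ j ∧ j < c ∧ f i < f c ∧ f c < f j := by
  obtain ⟨a, b, c, hab, hbc, hac, hcb⟩ := h
  obtain ⟨i, j, -, hij, hjb, hic, hcj⟩ :=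
    exists_covBy_and_not (p := fun k => f k ≤ f c) hab.le hac.le hcb.not_ge
  have hjc : j < c := hjb.trans_lt hbc
  exact ⟨i, j, c, hij, hjc, hic.lt_of_ne (hf.ne (hij.lt.trans hjc).ne), not_le.mp hcj⟩

theorem exists_isArc_lt_lt_lt (hf : Injective f) (hblocks : ∀ i j, IsArc f i j → f i < f j)
    {i j c : ι} (hij : i < j) (hjc : j < c) (hic : f i < f c) (hcj : f c < f j) :
    ∃ k l, IsArc f k l ∧ f k < f i ∧ f i < f l ∧ f l < f j := by
  obtain ⟨k, l, hjk, hkl, -, hk, hl⟩ :=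
    exists_covBy_and_not (p := fun m => f m ∉ Set.Ioo (f i) (f j)) hjc.le
      (fun hj => lt_irrefl _ hj.2) (not_not.mpr ⟨hic, hcj⟩)
  obtain ⟨hil, hlj⟩ := not_not.mp hl
  have hik : i < k := hij.trans_le hjk
  have harc : IsArc f k l := ⟨hkl, not_isLeftToRightMin_of_lt (hik.trans hkl.lt) hil⟩
  have hki : f k ≤ f i := not_lt.mp fun hik' => hk ⟨hik', (hblocks k l harc).trans hlj⟩
  exact ⟨k, l, harc, hki.lt_of_ne (hf.ne hik.ne'), hil, hlj⟩

theorem stmt16_general (hf : Injective f) (hblocks : ∀ i j, IsArc f i j → f i < f j) :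
    ¬ Contains132 f ↔ ¬ HasCrossingArcs f := by
  refine not_congr ⟨fun h => ?_, ?_⟩
  · obtain ⟨i, j, c, hij, hjc, hic, hcj⟩ := h.exists_covBy hf
    obtain ⟨k, l, hkl, hki, hil, hlj⟩ := exists_isArc_lt_lt_lt hf hblocks hij.lt hjc hic hcj
    have hij' : IsArc f i j := ⟨hij, not_isLeftToRightMin_of_lt hij.lt (hic.trans hcj)⟩
    exact ⟨k, l, i, j, hkl, hij', hki, hil, hlj⟩
  · rintro ⟨i, i', j, j', hi, hj, hij, hji', hij'⟩
    exact contains132_of_covBy_of_covBy hi.1 hj.1 hij hji' hij'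

end LocallyFinite

section Fin

variable {n : ℕ} [Preorder α] {f : Fin n → α}

theorem isArc_fin_iff {i j : Fin n} :
    IsArc f i j ↔ ∃ (k : ℕ) (h : k + 1 < n),
      i = ⟨k, Nat.lt_of_succ_lt h⟩ ∧ j = ⟨k + 1, h⟩ ∧ ¬ IsLeftToRightMin f ⟨k + 1, h⟩ := by
  constructor
  · rintro ⟨hij, hj⟩
    obtain ⟨j, hjn⟩ := j
    obtain rfl : (i : ℕ) + 1 = j := Nat.covBy_iff_add_one_eq.mp (Fin.covBy_iff.mp hij)
    exact ⟨i, hjn, rfl, rfl, hj⟩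
  · rintro ⟨k, h, rfl, rfl, hk⟩
    exact ⟨Fin.covBy_iff.mpr (Nat.covBy_iff_add_one_eq.mpr rfl), hk⟩

theorem hasCrossingArcs_fin_iff :
    HasCrossingArcs f ↔ ∃ (i j : ℕ) (hi : i + 1 < n) (hj : j + 1 < n),
      ¬ IsLeftToRightMin f ⟨i + 1, hi⟩ ∧ ¬ IsLeftToRightMin f ⟨j + 1, hj⟩ ∧
      f ⟨i, Nat.lt_of_succ_lt hi⟩ < f ⟨j, Nat.lt_of_succ_lt hj⟩ ∧
      f ⟨j, Nat.lt_of_succ_lt hj⟩ < f ⟨i + 1, hi⟩ ∧ f ⟨i + 1, hi⟩ < f ⟨j + 1, hj⟩ := by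
  simp only [HasCrossingArcs, isArc_fin_iff]
  constructor
  · rintro ⟨_, _, _, _, ⟨i, hi, rfl, rfl, hi'⟩, ⟨j, hj, rfl, rfl, hj'⟩, hlt⟩
    exact ⟨i, j, hi, hj, hi', hj', hlt⟩
  · rintro ⟨i, j, hi, hj, hi', hj', hlt⟩
    exact ⟨_, _, _, _, ⟨i, hi, rfl, rfl, hi'⟩, ⟨j, hj, rfl, rfl, hj'⟩, hlt⟩

theorem isArc_imp_lt_fin_iff :
    (∀ i j, IsArc f i j → f i < f j) ↔ ∀ (i : ℕ) (h : i + 1 < n),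
      ¬ IsLeftToRightMin f ⟨i + 1, h⟩ → f ⟨i, Nat.lt_of_succ_lt h⟩ < f ⟨i + 1, h⟩ := by
  simp only [isArc_fin_iff]
  constructor
  · exact fun H i h hi => H _ _ ⟨i, h, rfl, rfl, hi⟩
  · rintro H _ _ ⟨i, h, rfl, rfl, hi⟩
    exact H i h hi

end Fin

/-- Lemma `132`. Let `π ∈ S_n` be such that each of its LTRM blocks is
increasing, i.e. `π_i < π_{i+1}` whenever `π_{i+1}` is not a left-to-right minimum (this is the
hypothesis that `π` has a geometric representation; the arcs are exactly the pairs
`(π_i, π_{i+1})` with `π_{i+1}` not an LTR minimum). Then `π` avoids `132` if and only if no two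
arcs `(a, b)`, `(c, d)` of `π` cross, i.e. there are no two arcs with `a < c < b < d`. -/
theorem stmt16 (n : ℕ) (π : Equiv.Perm (Fin n))
    (hblocks : ∀ (i : ℕ) (h : i + 1 < n),
      ¬ IsLTRMin π ⟨i + 1, h⟩ → π ⟨i, by omega⟩ < π ⟨i + 1, h⟩) :
    Avoids132 π ↔
      ¬ ∃ (i j : ℕ) (hi : i + 1 < n) (hj : j + 1 < n),
        ¬ IsLTRMin π ⟨i + 1, hi⟩ ∧ ¬ IsLTRMin π ⟨j + 1, hj⟩ ∧
        π ⟨i, by omega⟩ < π ⟨j, by omega⟩ ∧ π ⟨j, by omega⟩ < π ⟨i + 1, hi⟩ ∧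
        π ⟨i + 1, hi⟩ < π ⟨j + 1, hj⟩ :=
  (stmt16_general π.injective (isArc_imp_lt_fin_iff.mpr hblocks)).trans
    (not_congr hasCrossingArcs_fin_iff)
end
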